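/- arXiv:1412.4572 — 2 statements merged into one kernel-verified Lean document; each statement's English description precedes it below -/
import Mathlib

section
/- Let G and H be finitely presented groups which are quasi-isometric. Then G has decidable domino problem if and only if H has decidable domino problem. -/
/-- The Cayley graph of a group with respect to a (symmetric) set `S`:
`g` and `g'` are adjacent when they differ by right multiplication by an element of `S`. -/
def cayley {G : Type*} [Group G] (S : Set G) : SimpleGraph G :=
  SimpleGraph.fromRel (fun g g' => g⁻¹ * g' ∈ S)

/-- `f : G → H` is a quasi-isometry for the word metrics: for some `n > 0` it is an
`n`-quasi-isometric embedding and `n`-quasi-surjective. -/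
def IsQI {G H : Type*} [Group G] [Group H] (S : Set G) (T : Set H) (f : G → H) : Prop :=
  ∃ n : ℕ, 0 < n ∧
    (∀ x y : G,
      ((cayley S).dist x y : ℝ) / n - n ≤ ((cayley T).dist (f x) (f y) : ℝ) ∧
      ((cayley T).dist (f x) (f y) : ℝ) ≤ n * ((cayley S).dist x y : ℝ) + n) ∧
    (∀ h : H, ∃ g : G, (cayley T).dist (f g) h ≤ n)

/-- The finite symmetric generating set of `G` determined by a marking
`π : FreeGroup (Fin m) →* G`: the images of the `m` generators and their inverses. -/
def markedGens {G : Type*} [Group G] {m : ℕ} (π : FreeGroup (Fin m) →* G) : Set G :=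
  {x : G | ∃ i : Fin m, x = π (FreeGroup.of i) ∨ x = (π (FreeGroup.of i))⁻¹}

/-- The subshift of finite type on alphabet `Fin k` defined by an encoded list of forbidden
patterns: each pattern is a finite list of pairs (word over the `m` marked generators and
their inverses, color).  A configuration `σ : G → Fin k` belongs to the subshift when at
every `g ∈ G`, every pattern fails at some of its entries: the value of `σ` at the point
`g · (element represented by the word q.1)` differs from the prescribed color `q.2`. -/
def dominoSet {G : Type*} [Group G] {m : ℕ} (π : FreeGroup (Fin m) →* G) (k : ℕ)
    (P : List (List (List (Fin m × Bool) × ℕ))) : Set (G → Fin k) :=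
  {σ : G → Fin k | ∀ g : G, ∀ p ∈ P, ∃ q ∈ p,
    ((σ (g * π (FreeGroup.mk q.1)) : Fin k) : ℕ) ≠ q.2}

/-- `G` (with marking `π`) has decidable domino problem: there is an algorithm deciding, on
input an alphabet size `k` and an encoded finite list of forbidden patterns (group elements
given as words in the marked generators), whether the subshift of finite type they define is
empty. -/
def HasDecidableDomino {G : Type*} [Group G] {m : ℕ}
    (π : FreeGroup (Fin m) →* G) : Prop :=
  ComputablePred (fun I : ℕ × List (List (List (Fin m × Bool) × ℕ)) =>
    dominoSet π I.1 I.2 = ∅)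


/-! ### The simulator -/

/-- Words over `m` generators and their inverses. -/
abbrev QWd (m : ℕ) := List (Fin m × Bool)

/-- Patterns. -/
abbrev QPat (m : ℕ) := List (QWd m × ℕ)

section sim

variable {mG mH n : ℕ} (tab : ℕ → Fin n → Fin mH × Bool → QWd mG × Fin n)

/-- One step of the symbolic simulation. -/
def simStep (K : ℕ) (S : List (QPat mG × QWd mG × Fin n)) (t : Fin mH × Bool) :
    List (QPat mG × QWd mG × Fin n) :=
  S.flatMap fun s => (List.range K).map fun κ =>
    ((s.2.1, κ) :: s.1, s.2.1 ++ (tab κ s.2.2 t).1, (tab κ s.2.2 t).2)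

/-- All symbolic runs along a word. -/
def simLifts (K : ℕ) (i : Fin n) (w : QWd mH) : List (QPat mG × QWd mG × Fin n) :=
  w.foldl (simStep tab K) [([], [], i)]

/-- The tile stored at index `i` of colour `κ`. -/
def simTile (L B κ : ℕ) (i : Fin n) : ℕ := κ / L / B ^ (i : ℕ) % B

/-- Patterns for one entry of a pattern. -/
def simEntry (L B K : ℕ) (i : Fin n) (q : QWd mH × ℕ) : List (QPat mG) :=
  (simLifts tab K i q.1).flatMap fun s => (List.range K).flatMap fun κ =>
    if simTile L B κ s.2.2 = q.2 then [(s.2.1, κ) :: s.1] else []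

/-- Patterns simulating a pattern. -/
def simPats (L B K : ℕ) (i : Fin n) (p : QPat mH) : List (QPat mG) :=
  p.foldl (fun acc q => acc.flatMap fun l => (simEntry tab L B K i q).map fun l' => l' ++ l) [[]]

/-- The block of patterns simulating a list of patterns. -/
def simBlock (L B K : ℕ) (P : List (QPat mH)) : List (QPat mG) :=
  P.flatMap fun p => (List.finRange n).flatMap fun i => simPats tab L B K i p

open Classical in
/-- Patterns forcing relators to act trivially. -/
noncomputable def simRel (V : List (QWd mG)) (Rl : List (QWd mH)) (K : ℕ) : List (QPat mG) :=
  Rl.flatMap fun r => (List.finRange n).flatMap fun i => (simLifts tab K i r).flatMap fun s =>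
    if s.2.1 ∈ V ∧ s.2.2 = i then [] else [s.1]

/-- Shift of colours by one. -/
def simShift (P : List (QPat mH)) : List (QPat mH) :=
  P.map fun p => p.map fun q => (q.1, q.2 + 1)

/-- Patterns forcing active states to remain active. -/
def simAct (mH k : ℕ) : List (QPat mH) :=
  (List.range k).flatMap fun a =>
    ((List.finRange mH).flatMap fun j => [(j, true), (j, false)]).map fun t =>
      [([], a + 1), ([t], 0)]

/-- Number of colours. -/
def simK (L n k : ℕ) : ℕ := L * (k + 1) ^ n

/-- The output of the reduction. -/
noncomputable def simOut (L : ℕ) (P5 : List (QPat mG)) (V : List (QWd mG)) (Rl : List (QWd mH))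
    (I : ℕ × List (QPat mH)) : ℕ × List (QPat mG) :=
  (simK L n I.1, P5 ++ (simRel tab V Rl (simK L n I.1) ++
    simBlock tab L (I.1 + 1) (simK L n I.1) (simAct mH I.1 ++ simShift I.2)))

theorem primrec_pow : Primrec₂ (fun a b : ℕ => a ^ b) :=
  (Primrec₂.unpaired' (f := fun a b : ℕ => a ^ b)).1 Nat.Primrec.pow

variable {tab}

theorem simLifts_primrec
    (htab : Primrec fun x : ℕ × Fin n × (Fin mH × Bool) => tab x.1 x.2.1 x.2.2)
    {α : Type*} [Primcodable α] {fK : α → ℕ} {fi : α → Fin n}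
    {fw : α → QWd mH} (hK : Primrec fK) (hi : Primrec fi) (hw : Primrec fw) :
    Primrec fun a => simLifts tab (fK a) (fi a) (fw a) := by
  unfold simLifts
  refine Primrec.list_foldl (h := fun (x : α) (y : List (QPat mG × QWd mG × Fin n) ×
    (Fin mH × Bool)) => simStep tab (fK x) y.1 y.2) hw ?_ ?_
  · exact Primrec.list_cons.comp ((Primrec.const []).pair ((Primrec.const []).pair hi))
      (Primrec.const [])
  · unfold simStep
    refine Primrec.list_flatMap (Primrec.fst.comp Primrec.snd) ?_
    refine Primrec.list_map (Primrec.list_range.comp (hK.comp (Primrec.fst.comp Primrec.fst))) ?_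
    have hs : Primrec fun y : ((α ×
      List (QPat mG × QWd mG × Fin n) × Fin mH × Bool) × QPat mG × QWd mG × Fin n) × ℕ => y.1.2 :=
      Primrec.snd.comp Primrec.fst
    have hs1 := Primrec.fst.comp hs
    have hs2 := Primrec.fst.comp (Primrec.snd.comp hs)
    have hs3 := Primrec.snd.comp (Primrec.snd.comp hs)
    have hc : Primrec fun y : ((α ×
      List (QPat mG × QWd mG × Fin n) × Fin mH × Bool) × QPat mG × QWd mG × Fin n) × ℕ =>
        y.1.1.2.2 := Primrec.snd.comp (Primrec.snd.comp (Primrec.fst.comp Primrec.fst))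
    have ht : Primrec fun y : ((α ×
      List (QPat mG × QWd mG × Fin n) × Fin mH × Bool) × QPat mG × QWd mG × Fin n) × ℕ =>
        tab y.2 y.1.2.2.2 y.1.1.2.2 :=
      htab.comp (Primrec.snd.pair (hs3.pair hc))
    exact (Primrec.list_cons.comp (hs2.pair Primrec.snd) hs1).pair
      ((Primrec.list_append.comp hs2 (Primrec.fst.comp ht)).pair (Primrec.snd.comp ht))

theorem simTile_primrec (L : ℕ) {α : Type*} [Primcodable α] {fB fκ : α → ℕ} {fi : α → Fin n}
    (hB : Primrec fB) (hκ : Primrec fκ) (hi : Primrec fi) :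
    Primrec fun a => simTile L (fB a) (fκ a) (fi a) := by
  unfold simTile
  exact Primrec.nat_mod.comp (Primrec.nat_div.comp (Primrec.nat_div.comp
    hκ (Primrec.const L)) (primrec_pow.comp hB (Primrec.fin_val.comp hi))) hB

theorem simEntry_primrec
    (htab : Primrec fun x : ℕ × Fin n × (Fin mH × Bool) => tab x.1 x.2.1 x.2.2)
    (L : ℕ) {α : Type*} [Primcodable α] {fB fK : α → ℕ} {fi : α → Fin n}
    {fq : α → QWd mH × ℕ} (hB : Primrec fB) (hK : Primrec fK) (hi : Primrec fi)
    (hq : Primrec fq) :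
    Primrec fun a => simEntry tab L (fB a) (fK a) (fi a) (fq a) := by
  unfold simEntry
  refine Primrec.list_flatMap (simLifts_primrec htab hK hi (Primrec.fst.comp hq)) ?_
  refine Primrec.list_flatMap (Primrec.list_range.comp (hK.comp Primrec.fst)) ?_
  have hs : Primrec fun y : (α × QPat mG × QWd mG × Fin n) × ℕ => y.1.2 :=
    Primrec.snd.comp Primrec.fst
  have hx : Primrec fun y : (α × QPat mG × QWd mG × Fin n) × ℕ => y.1.1 :=
    Primrec.fst.comp Primrec.fst
  have hs1 := Primrec.fst.comp hs
  have hs2 := Primrec.fst.comp (Primrec.snd.comp hs)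
  have hs3 := Primrec.snd.comp (Primrec.snd.comp hs)
  have h1 := simTile_primrec L (hB.comp hx) Primrec.snd hs3
  have h2 := Primrec.snd.comp (hq.comp hx)
  have h3 := Primrec.eq.comp h1 h2
  have h4 := Primrec.list_cons.comp (Primrec.list_cons.comp (hs2.pair Primrec.snd) hs1)
      (Primrec.const [])
  exact Primrec.ite h3 h4 (Primrec.const [])

theorem simPats_primrec
    (htab : Primrec fun x : ℕ × Fin n × (Fin mH × Bool) => tab x.1 x.2.1 x.2.2)
    (L : ℕ) {α : Type*} [Primcodable α] {fB fK : α → ℕ} {fi : α → Fin n}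
    {fp : α → QPat mH} (hB : Primrec fB) (hK : Primrec fK) (hi : Primrec fi)
    (hp : Primrec fp) :
    Primrec fun a => simPats tab L (fB a) (fK a) (fi a) (fp a) := by
  unfold simPats
  refine Primrec.list_foldl (h := fun (x : α) (y : List (QPat mG) × (QWd mH × ℕ)) =>
    y.1.flatMap fun l => (simEntry tab L (fB x) (fK x) (fi x) y.2).map fun l' => l' ++ l)
    hp (Primrec.const [[]]) ?_
  have hx : Primrec fun y : (α × List (QPat mG) × (QWd mH × ℕ)) × QPat mG => y.1.1 :=
    Primrec.fst.comp Primrec.fst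
  have hq : Primrec fun y : (α × List (QPat mG) × (QWd mH × ℕ)) × QPat mG => y.1.2.2 :=
    Primrec.snd.comp (Primrec.snd.comp Primrec.fst)
  have hE := simEntry_primrec htab L (hB.comp hx) (hK.comp hx) (hi.comp hx) hq
  refine Primrec.list_flatMap (Primrec.fst.comp Primrec.snd) ?_
  exact Primrec.list_map hE
    (Primrec.list_append.comp Primrec.snd (Primrec.snd.comp Primrec.fst))

theorem simBlock_primrec
    (htab : Primrec fun x : ℕ × Fin n × (Fin mH × Bool) => tab x.1 x.2.1 x.2.2)
    (L : ℕ) {α : Type*} [Primcodable α] {fB fK : α → ℕ}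
    {fP : α → List (QPat mH)} (hB : Primrec fB) (hK : Primrec fK) (hP : Primrec fP) :
    Primrec fun a => simBlock tab L (fB a) (fK a) (fP a) := by
  unfold simBlock
  refine Primrec.list_flatMap hP ?_
  refine Primrec.list_flatMap (Primrec.const (List.finRange n)) ?_
  have hx : Primrec fun y : (α × QPat mH) × Fin n => y.1.1 := Primrec.fst.comp Primrec.fst
  exact simPats_primrec htab L (hB.comp hx) (hK.comp hx) Primrec.snd
    (Primrec.snd.comp Primrec.fst)

theorem mem_const_primrec {α : Type*} [Primcodable α] (V : List α) :
    PrimrecPred fun a : α => a ∈ V := by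
  classical
  induction V with
  | nil => simpa using (PrimrecPred.of_eq (p := fun _ : α => (0 : ℕ) = 1) (q := fun _ => False)
      (Primrec.eq.comp (Primrec.const 0) (Primrec.const 1)) (by simp))
  | cons v V ih =>
    simp only [List.mem_cons]
    exact (Primrec.eq.comp Primrec.id (Primrec.const v)).or ih

theorem simRel_primrec
    (htab : Primrec fun x : ℕ × Fin n × (Fin mH × Bool) => tab x.1 x.2.1 x.2.2)
    (V : List (QWd mG)) (Rl : List (QWd mH)) :
    Primrec fun K : ℕ => simRel tab V Rl K := by
  unfold simRel
  refine Primrec.list_flatMap (Primrec.const Rl) ?_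
  refine Primrec.list_flatMap (Primrec.const (List.finRange n)) ?_
  refine Primrec.list_flatMap (simLifts_primrec htab
    (Primrec.fst.comp Primrec.fst) Primrec.snd (Primrec.snd.comp Primrec.fst)) ?_
  have hs : Primrec fun y : ((ℕ × QWd mH) × Fin n) × (QPat mG × QWd mG × Fin n) => y.2 :=
    Primrec.snd
  have hi : Primrec fun y : ((ℕ × QWd mH) × Fin n) × (QPat mG × QWd mG × Fin n) => y.1.2 :=
    Primrec.snd.comp Primrec.fst
  have hs1 := Primrec.fst.comp hs
  have hs2 := Primrec.fst.comp (Primrec.snd.comp hs)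
  have hs3 := Primrec.snd.comp (Primrec.snd.comp hs)
  have h1 := Primrec.eq.comp hs3 hi
  have h2 := (mem_const_primrec V).comp hs2
  exact Primrec.ite (h2.and h1) (Primrec.const [])
    (Primrec.list_cons.comp hs1 (Primrec.const []))

theorem simShift_primrec : Primrec (simShift (mH := mH)) := by
  unfold simShift
  refine Primrec.list_map Primrec.id ?_
  refine Primrec.list_map Primrec.snd ?_
  exact (Primrec.fst.comp Primrec.snd).pair (Primrec.succ.comp (Primrec.snd.comp Primrec.snd))

theorem simAct_primrec : Primrec (simAct mH) := by
  unfold simAct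
  refine Primrec.list_flatMap Primrec.list_range ?_
  refine Primrec.list_map (Primrec.const _) ?_
  refine Primrec.list_cons.comp ((Primrec.const []).pair
    (Primrec.succ.comp (Primrec.snd.comp Primrec.fst))) ?_
  exact Primrec.list_cons.comp ((Primrec.list_cons.comp Primrec.snd (Primrec.const [])).pair
    (Primrec.const 0)) (Primrec.const [])

theorem simOut_primrec
    (htab : Primrec fun x : ℕ × Fin n × (Fin mH × Bool) => tab x.1 x.2.1 x.2.2)
    (L : ℕ) (P5 : List (QPat mG)) (V : List (QWd mG)) (Rl : List (QWd mH)) :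
    Primrec (simOut tab L P5 V Rl) := by
  have hK : Primrec fun I : ℕ × List (QPat mH) => simK L n I.1 := by
    unfold simK
    exact Primrec.nat_mul.comp (Primrec.const L)
      (primrec_pow.comp (Primrec.succ.comp Primrec.fst) (Primrec.const n))
  have hA : Primrec fun I : ℕ × List (QPat mH) => simAct mH I.1 ++ simShift I.2 :=
    Primrec.list_append.comp (simAct_primrec.comp Primrec.fst)
      (simShift_primrec.comp Primrec.snd)
  have hB : Primrec fun I : ℕ × List (QPat mH) => I.1 + 1 := Primrec.succ.comp Primrec.fst
  have h1 := simBlock_primrec htab L hB hK hA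
  have h2 := (simRel_primrec htab V Rl).comp hK
  unfold simOut
  exact hK.pair (Primrec.list_append.comp (Primrec.const P5) (Primrec.list_append.comp h2 h1))

end sim

/-! ### Semantics of the simulator -/

section sem

variable {G : Type*} [Group G] {mG mH n : ℕ} (π : FreeGroup (Fin mG) →* G)
  (tab : ℕ → Fin n → Fin mH × Bool → QWd mG × Fin n) (σ : G → ℕ)

/-- One step of the actual dynamics. -/
def runStep (q : G × Fin n) (t : Fin mH × Bool) : G × Fin n :=
  (q.1 * π (FreeGroup.mk (tab (σ q.1) q.2 t).1), (tab (σ q.1) q.2 t).2)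

/-- Run along a word. -/
def runW (q : G × Fin n) (w : QWd mH) : G × Fin n := w.foldl (runStep π tab σ) q

/-- The pattern occurs at `g`. -/
def PMatch (g : G) (l : QPat mG) : Prop := ∀ q ∈ l, σ (g * π (FreeGroup.mk q.1)) = q.2

theorem pmatch_cons (g : G) (a : QWd mG × ℕ) (l : QPat mG) :
    PMatch π σ g (a :: l) ↔ σ (g * π (FreeGroup.mk a.1)) = a.2 ∧ PMatch π σ g l := by
  simp [PMatch]

theorem pmatch_append (g : G) (l l' : QPat mG) :
    PMatch π σ g (l ++ l') ↔ PMatch π σ g l ∧ PMatch π σ g l' := by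
  simp only [PMatch, List.mem_append, or_imp, forall_and]

theorem not_pmatch (g : G) (l : QPat mG) :
    ¬ PMatch π σ g l ↔ ∃ q ∈ l, σ (g * π (FreeGroup.mk q.1)) ≠ q.2 := by
  simp [PMatch]

theorem lifts_sound (K : ℕ) (g : G) (w : QWd mH) : ∀ (S : List (QPat mG × QWd mG × Fin n)),
    ∀ s ∈ w.foldl (simStep tab K) S, PMatch π σ g s.1 → ∃ s0 ∈ S, PMatch π σ g s0.1 ∧
      runW π tab σ (g * π (FreeGroup.mk s0.2.1), s0.2.2) w
        = (g * π (FreeGroup.mk s.2.1), s.2.2) := by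
  induction w with
  | nil => intro S s hs hm; exact ⟨s, hs, hm, rfl⟩
  | cons t w ih =>
    intro S s hs hm
    obtain ⟨s1, hs1, hm1, h1⟩ := ih _ s hs hm
    simp only [simStep, List.mem_flatMap, List.mem_map, List.mem_range] at hs1
    obtain ⟨s0, hs0, κ, hκ, rfl⟩ := hs1
    rw [pmatch_cons] at hm1
    refine ⟨s0, hs0, hm1.2, ?_⟩
    rw [← h1]
    simp only [runW, List.foldl_cons]
    congr 1
    have := hm1.1
    simp only at this
    simp only [runStep, this, mul_assoc, ← map_mul, FreeGroup.mul_mk]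

theorem lifts_complete (K : ℕ) (hσ : ∀ g, σ g < K) (g : G) (w : QWd mH) :
    ∀ (S : List (QPat mG × QWd mG × Fin n)),
    ∀ s0 ∈ S, PMatch π σ g s0.1 → ∃ s ∈ w.foldl (simStep tab K) S, PMatch π σ g s.1 ∧
      runW π tab σ (g * π (FreeGroup.mk s0.2.1), s0.2.2) w
        = (g * π (FreeGroup.mk s.2.1), s.2.2) := by
  induction w with
  | nil => intro S s hs hm; exact ⟨s, hs, hm, rfl⟩
  | cons t w ih =>
    intro S s0 hs0 hm
    set κ := σ (g * π (FreeGroup.mk s0.2.1)) with hκ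
    obtain ⟨s, hs, hm1, h1⟩ := ih (simStep tab K S t)
      ((s0.2.1, κ) :: s0.1, s0.2.1 ++ (tab κ s0.2.2 t).1, (tab κ s0.2.2 t).2) (by
        simp only [simStep, List.mem_flatMap, List.mem_map, List.mem_range]
        exact ⟨s0, hs0, κ, hσ _, rfl⟩) ((pmatch_cons _ _ _ _ _).2 ⟨rfl, hm⟩)
    refine ⟨s, hs, hm1, ?_⟩
    rw [← h1]
    simp only [runW, List.foldl_cons]
    congr 1
    simp only [runStep, ← hκ, mul_assoc, ← map_mul, FreeGroup.mul_mk]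

theorem lifts_length (K N : ℕ) (htab : ∀ κ i t, (tab κ i t).1.length ≤ N) (w : QWd mH) :
    ∀ (S : List (QPat mG × QWd mG × Fin n)) (M : ℕ), (∀ s ∈ S, s.2.1.length ≤ M) →
      ∀ s ∈ w.foldl (simStep tab K) S, s.2.1.length ≤ M + N * w.length := by
  induction w with
  | nil => intro S M h; simpa using h
  | cons t w ih =>
    intro S M h s hs
    have := ih (simStep tab K S t) (M + N) (by
      intro s1 hs1
      simp only [simStep, List.mem_flatMap, List.mem_map, List.mem_range] at hs1
      obtain ⟨s0, hs0, κ, hκ, rfl⟩ := hs1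
      have h1 := h s0 hs0
      have h2 := htab κ s0.2.2 t
      simp only [List.length_append]
      omega) s hs
    simp only [List.length_cons]
    linarith

theorem simLifts_sound (K : ℕ) (g : G) (i : Fin n) (w : QWd mH) :
    ∀ s ∈ simLifts tab K i w, PMatch π σ g s.1 →
      runW π tab σ (g, i) w = (g * π (FreeGroup.mk s.2.1), s.2.2) := by
  intro s hs hm
  obtain ⟨s0, hs0, -, h⟩ := lifts_sound π tab σ K g w _ s hs hm
  simp only [List.mem_singleton] at hs0
  subst hs0
  simpa [← FreeGroup.one_eq_mk] using h

theorem simLifts_complete (K : ℕ) (hσ : ∀ g, σ g < K) (g : G) (i : Fin n) (w : QWd mH) :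
    ∃ s ∈ simLifts tab K i w, PMatch π σ g s.1 ∧
      runW π tab σ (g, i) w = (g * π (FreeGroup.mk s.2.1), s.2.2) := by
  obtain ⟨s, hs, hm, h⟩ := lifts_complete π tab σ K hσ g w [([], [], i)] ([], [], i) (by simp)
    (by simp [PMatch])
  refine ⟨s, hs, hm, ?_⟩
  simpa [← FreeGroup.one_eq_mk] using h

/-- The tile at a state. -/
def stTile (L B : ℕ) (q : G × Fin n) : ℕ := simTile L B (σ q.1) q.2

theorem simEntry_iff (L B K : ℕ) (hσ : ∀ g, σ g < K) (g : G) (i : Fin n) (q : QWd mH × ℕ) :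
    (∃ l ∈ simEntry tab L B K i q, PMatch π σ g l) ↔
      stTile σ L B (runW π tab σ (g, i) q.1) = q.2 := by
  simp only [simEntry, List.mem_flatMap, List.mem_range]
  constructor
  · rintro ⟨l, ⟨s, hs, κ, hκ, hl⟩, hm⟩
    split_ifs at hl with h
    · simp only [List.mem_singleton] at hl
      subst hl
      rw [pmatch_cons] at hm
      rw [simLifts_sound π tab σ K g i q.1 s hs hm.2]
      simpa [stTile, hm.1] using h
    · simp at hl
  · intro h
    obtain ⟨s, hs, hm, hr⟩ := simLifts_complete π tab σ K hσ g i q.1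
    rw [hr] at h
    refine ⟨(s.2.1, σ (g * π (FreeGroup.mk s.2.1))) :: s.1, ⟨s, hs, _, hσ (g * π (FreeGroup.mk s.2.1)), ?_⟩,
      (pmatch_cons _ _ _ _ _).2 ⟨rfl, hm⟩⟩
    simp only [stTile] at h
    rw [if_pos h]
    simp

theorem simPats_iff (L B K : ℕ) (hσ : ∀ g, σ g < K) (g : G) (i : Fin n) (p : QPat mH) :
    (∃ l ∈ simPats tab L B K i p, PMatch π σ g l) ↔
      ∀ q ∈ p, stTile σ L B (runW π tab σ (g, i) q.1) = q.2 := by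
  have key : ∀ (p : QPat mH) (acc : List (QPat mG)),
      (∃ l ∈ p.foldl (fun acc q => acc.flatMap fun l =>
        (simEntry tab L B K i q).map fun l' => l' ++ l) acc, PMatch π σ g l) ↔
      (∃ l ∈ acc, PMatch π σ g l) ∧
      ∀ q ∈ p, stTile σ L B (runW π tab σ (g, i) q.1) = q.2 := by
    intro p
    induction p with
    | nil => intro acc; simp
    | cons q p ih =>
      intro acc
      rw [List.foldl_cons, ih, List.forall_mem_cons, ← simEntry_iff π tab σ L B K hσ g i q,
        ← and_assoc]
      refine and_congr_left fun _ => ?_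
      simp only [List.mem_flatMap, List.mem_map]
      constructor
      · rintro ⟨_, ⟨l, hl, l', hl', rfl⟩, hm⟩
        rw [pmatch_append] at hm
        exact ⟨⟨l, hl, hm.2⟩, l', hl', hm.1⟩
      · rintro ⟨⟨l, hl, hm⟩, l', hl', hm'⟩
        exact ⟨_, ⟨l, hl, l', hl', rfl⟩, (pmatch_append _ _ _ _ _).2 ⟨hm', hm⟩⟩
  rw [simPats, key]
  simp [PMatch]

theorem simBlock_iff (L B K : ℕ) (hσ : ∀ g, σ g < K) (P : List (QPat mH)) :
    (∀ g, ∀ l ∈ simBlock tab L B K P, ¬ PMatch π σ g l) ↔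
      ∀ q0 : G × Fin n, ∀ p ∈ P, ∃ q ∈ p, stTile σ L B (runW π tab σ q0 q.1) ≠ q.2 := by
  simp only [simBlock, List.mem_flatMap, List.mem_finRange, true_and]
  constructor
  · rintro h ⟨g, i⟩ p hp
    by_contra! hc
    obtain ⟨l, hl, hm⟩ := (simPats_iff π tab σ L B K hσ g i p).2 hc
    exact h g l ⟨p, hp, i, hl⟩ hm
  · rintro h g l ⟨p, hp, i, hl⟩ hm
    obtain ⟨q, hq, hne⟩ := h (g, i) p hp
    exact hne ((simPats_iff π tab σ L B K hσ g i p).1 ⟨l, hl, hm⟩ q hq)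

theorem simRel_sound (V : List (QWd mG)) (hV : ∀ v ∈ V, π (FreeGroup.mk v) = 1)
    (Rl : List (QWd mH)) (K : ℕ) (hσ : ∀ g, σ g < K)
    (h : ∀ g, ∀ l ∈ simRel tab V Rl K, ¬ PMatch π σ g l) :
    ∀ r ∈ Rl, ∀ q : G × Fin n, runW π tab σ q r = q := by
  rintro r hr ⟨g, i⟩
  obtain ⟨s, hs, hm, hrun⟩ := simLifts_complete π tab σ K hσ g i r
  by_cases hc : s.2.1 ∈ V ∧ s.2.2 = i
  · rw [hrun, hV _ hc.1, hc.2, mul_one]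
  · exfalso
    refine h g s.1 ?_ hm
    simp only [simRel, List.mem_flatMap, List.mem_finRange, true_and]
    refine ⟨r, hr, i, s, hs, ?_⟩
    rw [if_neg hc]
    simp

theorem simRel_complete (V : List (QWd mG)) (N M : ℕ)
    (hV : ∀ v : QWd mG, v.length ≤ N * M → π (FreeGroup.mk v) = 1 → v ∈ V)
    (htab : ∀ κ i t, (tab κ i t).1.length ≤ N)
    (Rl : List (QWd mH)) (hM : ∀ r ∈ Rl, r.length ≤ M) (K : ℕ)
    (h : ∀ r ∈ Rl, ∀ q : G × Fin n, runW π tab σ q r = q) :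
    ∀ g, ∀ l ∈ simRel tab V Rl K, ¬ PMatch π σ g l := by
  intro g l hl hm
  simp only [simRel, List.mem_flatMap, List.mem_finRange, true_and] at hl
  obtain ⟨r, hr, i, s, hs, hl⟩ := hl
  split_ifs at hl with hc
  · simp at hl
  · simp only [List.mem_singleton] at hl
    subst hl
    have h1 := simLifts_sound π tab σ K g i r s hs hm
    rw [h r hr, Prod.mk.injEq] at h1
    refine hc ⟨hV _ ?_ ?_, h1.2.symm⟩
    · have := lifts_length tab K N htab r [([], [], i)] 0 (by simp) s hs
      have h2 := Nat.mul_le_mul_left N (hM r hr)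
      omega
    · have := h1.1
      simpa using this

end sem

/-! ### The reduction is correct -/

section red

variable {G H : Type*} [Group G] [Group H] {mG mH n : ℕ} (πG : FreeGroup (Fin mG) →* G)
  (πH : FreeGroup (Fin mH) →* H)

/-- All patterns with support `W` and colours below `L`. -/
def patAll (L : ℕ) (W : List (QWd mG)) : List (QPat mG) :=
  W.foldr (fun w acc => acc.flatMap fun l => (List.range L).map fun κ => (w, κ) :: l) [[]]

theorem patAll_iff (L : ℕ) (σ : G → ℕ) (g : G) (W : List (QWd mG)) :
    (∃ l ∈ patAll L W, PMatch πG σ g l) ↔ ∀ w ∈ W, σ (g * πG (FreeGroup.mk w)) < L := by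
  induction W with
  | nil => simp [patAll, PMatch]
  | cons w W ih =>
    rw [List.forall_mem_cons, ← ih]
    simp only [patAll, List.foldr_cons, List.mem_flatMap, List.mem_map, List.mem_range]
    constructor
    · rintro ⟨_, ⟨l, hl, κ, hκ, rfl⟩, hm⟩
      rw [pmatch_cons] at hm
      exact ⟨by rw [hm.1]; exact hκ, l, hl, hm.2⟩
    · rintro ⟨h, l, hl, hm⟩
      exact ⟨_, ⟨l, hl, _, h, rfl⟩, (pmatch_cons _ _ _ _ _).2 ⟨rfl, hm⟩⟩

theorem mem_dominoSet_iff (k : ℕ) (P : List (QPat mG)) (σ : G → Fin k) :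
    σ ∈ dominoSet πG k P ↔ ∀ g, ∀ l ∈ P, ¬ PMatch πG (fun g => (σ g : ℕ)) g l := by
  simp only [dominoSet, Set.mem_ofPred_eq, not_pmatch]

theorem runW_append (tab : ℕ → Fin n → Fin mH × Bool → QWd mG × Fin n) (σ : G → ℕ)
    (q : G × Fin n) (w w' : QWd mH) :
    runW πG tab σ q (w ++ w') = runW πG tab σ (runW πG tab σ q w) w' := by
  simp [runW]

theorem exists_orbit (hπH : Function.Surjective πH) (R : Finset (FreeGroup (Fin mH)))
    (hR : πH.ker = Subgroup.normalClosure (R : Set (FreeGroup (Fin mH))))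
    (tab : ℕ → Fin n → Fin mH × Bool → QWd mG × Fin n) (σ : G → ℕ)
    (hrel : ∀ r ∈ R, ∀ q, runW πG tab σ q r.toWord = q)
    (hinv : ∀ j b q, runW πG tab σ q [(j, b), (j, !b)] = q) (q0 : G × Fin n) :
    ∃ st : H → G × Fin n, st 1 = q0 ∧
      ∀ h w, st (h * πH (FreeGroup.mk w)) = runW πG tab σ (st h) w := by
  let e : Fin mH → Equiv.Perm (G × Fin n) := fun j =>
    { toFun := fun q => runStep πG tab σ q (j, true)
      invFun := fun q => runStep πG tab σ q (j, false)
      left_inv := fun q => hinv j true q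
      right_inv := fun q => hinv j false q }
  let Φ : FreeGroup (Fin mH) →* (Equiv.Perm (G × Fin n))ᵐᵒᵖ :=
    FreeGroup.lift fun j => MulOpposite.op (e j)
  have hΦ : ∀ (w : QWd mH) q, (Φ (FreeGroup.mk w)).unop q = runW πG tab σ q w := by
    intro w
    induction w with
    | nil => intro q; simp [runW, ← FreeGroup.one_eq_mk]
    | cons t w ih =>
      intro q
      have : FreeGroup.mk (t :: w) = FreeGroup.mk [t] * FreeGroup.mk w := by
        simp [FreeGroup.mul_mk]
      rw [this, map_mul, MulOpposite.unop_mul, Equiv.Perm.mul_apply, ih]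
      simp only [runW, List.foldl_cons]
      congr 1
      obtain ⟨j, b⟩ := t
      cases b
      · simp only [Φ, FreeGroup.lift_mk]
        simp
        rfl
      · simp only [Φ, FreeGroup.lift_mk]
        simp
        rfl
  have hker : πH.ker ≤ Φ.ker := by
    rw [hR]
    refine Subgroup.normalClosure_le_normal ?_
    intro r hr
    rw [SetLike.mem_coe, MonoidHom.mem_ker, ← FreeGroup.mk_toWord (x := r)]
    apply MulOpposite.unop_injective
    ext1 q
    rw [hΦ, hrel r hr]
    simp
  obtain ⟨sec, hsec⟩ := hπH.hasRightInverse
  have hfac : ∀ a b, πH a = πH b → Φ a = Φ b := by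
    intro a b hab
    have : a⁻¹ * b ∈ Φ.ker := hker (by simp [MonoidHom.mem_ker, hab])
    rw [MonoidHom.mem_ker, map_mul, map_inv, inv_mul_eq_one] at this
    exact this
  refine ⟨fun h => (Φ (sec h)).unop q0, ?_, ?_⟩
  · beta_reduce
    rw [hfac (sec 1) 1 (by rw [hsec, map_one])]
    simp
  · intro h w
    rw [← hΦ, ← Equiv.Perm.mul_apply, ← MulOpposite.unop_mul, ← map_mul]
    beta_reduce
    rw [hfac (sec (h * πH (FreeGroup.mk w))) (sec h * FreeGroup.mk w)]
    rw [map_mul, hsec, hsec]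

theorem mem_simAct_iff (k : ℕ) (p : QPat mH) :
    p ∈ simAct mH k ↔ ∃ a < k, ∃ t, p = [([], a + 1), ([t], 0)] := by
  simp only [simAct, List.mem_flatMap, List.mem_range, List.mem_map, List.mem_finRange, true_and]
  constructor
  · rintro ⟨a, ha, t, _, rfl⟩
    exact ⟨a, ha, t, rfl⟩
  · rintro ⟨a, ha, ⟨j, b⟩, rfl⟩
    exact ⟨a, ha, (j, b), ⟨j, by cases b <;> simp⟩, rfl⟩

theorem mem_simShift_iff (P : List (QPat mH)) (p : QPat mH) :
    p ∈ simShift P ↔ ∃ p0 ∈ P, p0.map (fun q => (q.1, q.2 + 1)) = p := by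
  simp [simShift]

theorem simTile_encode (L B : ℕ) (hL : 0 < L) (ℓ : Fin L) (τ : Fin n → Fin B) (i : Fin n) :
    simTile L B (ℓ + L * (finFunctionFinEquiv τ : ℕ)) i = τ i := by
  have h := congrFun (finFunctionFinEquiv.symm_apply_apply τ) i
  have h2 := congrArg Fin.val h
  rw [simTile, Nat.add_mul_div_left _ _ hL, Nat.div_eq_of_lt ℓ.2, zero_add]
  exact h2

theorem exists_tile_ne_zero (L B κ : ℕ) (hB : 0 < B) (h1 : L ≤ κ) (hL : 0 < L)
    (h2 : κ < L * B ^ n) : ∃ i : Fin n, simTile L B κ i ≠ 0 := by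
  by_contra! hc
  have hm : κ / L < B ^ n := Nat.div_lt_of_lt_mul h2
  have hpos : 0 < κ / L := Nat.div_pos h1 hL
  have : (finFunctionFinEquiv.symm (⟨κ / L, hm⟩ : Fin (B ^ n)) : Fin n → Fin B)
      = finFunctionFinEquiv.symm ⟨0, by positivity⟩ := by
    funext i
    apply Fin.ext
    have := hc i
    have h0 : (0 : ℕ) / B ^ (i : ℕ) % B = 0 := by simp
    exact this.trans h0.symm
  have := congrArg Fin.val (finFunctionFinEquiv.symm.injective this)
  simp only at this
  omega

theorem finite_words (m N : ℕ) : {w : QWd m | w.length ≤ N}.Finite :=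
  List.finite_length_le (Fin m × Bool) N

theorem domino_transfer (hπH : Function.Surjective πH) (R : Finset (FreeGroup (Fin mH)))
    (hR : πH.ker = Subgroup.normalClosure (R : Set (FreeGroup (Fin mH))))
    (ψ : H → G) (N : ℕ) (idx : H → Fin n)
    (hinj : ∀ h h', ψ h = ψ h' → idx h = idx h' → h = h')
    (hlip : ∀ h t, ∃ w : QWd mG, w.length ≤ N ∧
      ψ (h * πH (FreeGroup.mk [t])) = ψ h * πG (FreeGroup.mk w))
    (hdense : ∀ g, ∃ h, ∃ w : QWd mG, w.length ≤ N ∧ ψ h = g * πG (FreeGroup.mk w)) :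
    HasDecidableDomino πG → HasDecidableDomino πH := by
  classical
  intro hdec
  have : Finite {w : QWd mG // w.length ≤ N} := finite_words mG N
  have : Fintype {w : QWd mG // w.length ≤ N} := Fintype.ofFinite _
  let Lab := Fin n → Fin mH × Bool → {w : QWd mG // w.length ≤ N} × Fin n
  let L := Fintype.card Lab
  let eL : Lab ≃ Fin L := Fintype.equivFin Lab
  have hL : 0 < L := Fintype.card_pos_iff.2 ⟨fun i _ => (⟨[], by simp⟩, i)⟩
  let tab0 : Fin L × Fin n × (Fin mH × Bool) → QWd mG × Fin n := fun x =>
    ((eL.symm x.1 x.2.1 x.2.2).1.1, (eL.symm x.1 x.2.1 x.2.2).2)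
  let tab : ℕ → Fin n → Fin mH × Bool → QWd mG × Fin n := fun κ i t =>
    tab0 (⟨κ % L, Nat.mod_lt _ hL⟩, i, t)
  have htabp : Primrec fun x : ℕ × Fin n × (Fin mH × Bool) => tab x.1 x.2.1 x.2.2 := by
    have h1 : Primrec fun x : ℕ × Fin n × (Fin mH × Bool) =>
        (⟨x.1 % L, Nat.mod_lt _ hL⟩ : Fin L) :=
      Primrec.fin_val_iff.1 (Primrec.nat_mod.comp Primrec.fst (Primrec.const L))
    exact (Primrec.dom_finite tab0).comp (h1.pair Primrec.snd)
  have htabN : ∀ κ i t, (tab κ i t).1.length ≤ N := fun κ i t =>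
    (eL.symm ⟨κ % L, Nat.mod_lt _ hL⟩ i t).1.2
  let W := (finite_words mG N).toFinset.toList
  have hW : ∀ w, w ∈ W ↔ w.length ≤ N := fun w => by simp [W]
  let Rl : List (QWd mH) := R.toList.map FreeGroup.toWord ++
    (List.finRange mH).flatMap fun j => [[(j, true), (j, false)], [(j, false), (j, true)]]
  let M := (Rl.map List.length).sum
  have hM : ∀ r ∈ Rl, r.length ≤ M := fun r hr =>
    List.le_sum_of_mem (List.mem_map_of_mem hr)
  let V := ((finite_words mG (N * M)).toFinset.filter
    fun v => πG (FreeGroup.mk v) = 1).toList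
  have hV : ∀ v, v ∈ V ↔ v.length ≤ N * M ∧ πG (FreeGroup.mk v) = 1 := fun v => by simp [V]
  refine ComputablePred.computable_of_manyOneReducible ?_ hdec
  refine ⟨simOut tab L (patAll L W) V Rl, (simOut_primrec htabp L _ V Rl).to_comp, ?_⟩
  rintro ⟨k, P⟩
  rw [← not_iff_not, ← ne_eq, ← ne_eq, ← Set.nonempty_iff_ne_empty, ← Set.nonempty_iff_ne_empty]
  change (dominoSet πH k P).Nonempty ↔ (dominoSet πG (simK L n k)
    (simOut tab L (patAll L W) V Rl (k, P)).2).Nonempty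
  have hsplit : ∀ σ : G → Fin (simK L n k),
      σ ∈ dominoSet πG (simK L n k)
        (simOut tab L (patAll L W) V Rl (k, P)).2 ↔
      (∀ g, ∃ w ∈ W, L ≤ (σ (g * πG (FreeGroup.mk w)) : ℕ)) ∧
      (∀ g, ∀ l ∈ simRel tab V Rl (simK L n k), ¬ PMatch πG (fun g => (σ g : ℕ)) g l) ∧
      (∀ q0 : G × Fin n, ∀ p ∈ simAct mH k ++ simShift P, ∃ q ∈ p,
        stTile (fun g => (σ g : ℕ)) L (k + 1)
          (runW πG tab (fun g => (σ g : ℕ)) q0 q.1) ≠ q.2) := by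
    intro σ
    rw [← simBlock_iff πG tab (fun g => (σ g : ℕ)) L (k + 1) (simK L n k) (fun g => (σ g).2),
      mem_dominoSet_iff]
    simp only [simOut, List.mem_append]
    rw [← forall_and, ← forall_and]
    refine forall_congr' fun g => ?_
    simp only [or_imp, forall_and]
    refine and_congr_left fun _ => ?_
    have := not_congr (patAll_iff πG L (fun g => (σ g : ℕ)) g W)
    push Not at this
    exact this
  constructor
  · -- from `H` to `G`
    rintro ⟨x, hx⟩
    choose wd hwd1 hwd2 using hlip
    let act : G × Fin n → Prop := fun q => ∃ h, ψ h = q.1 ∧ idx h = q.2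
    let hh : ∀ q, act q → H := fun q hq => hq.choose
    have hhe : ∀ h (ha : act (ψ h, idx h)), hh (ψ h, idx h) ha = h := fun h ha =>
      hinj _ _ ha.choose_spec.1 ha.choose_spec.2
    let lab : G → Lab := fun g i t =>
      if ha : act (g, i) then (⟨wd (hh _ ha) t, hwd1 _ _⟩, idx (hh _ ha * πH (FreeGroup.mk [t])))
      else (⟨[], by simp⟩, i)
    let τ : G → Fin n → Fin (k + 1) := fun g i =>
      if ha : act (g, i) then (x (hh _ ha)).succ else 0
    let σ : G → Fin (simK L n k) := fun g =>
      ⟨(eL (lab g) : ℕ) + L * (finFunctionFinEquiv (τ g) : ℕ), by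
        have h1 := (eL (lab g)).2
        have h2 := (finFunctionFinEquiv (τ g)).2
        have h3 := Nat.mul_le_mul_left L (Nat.succ_le_of_lt h2)
        rw [Nat.mul_succ] at h3
        unfold simK
        omega⟩
    have htile : ∀ q : G × Fin n, stTile (fun g => (σ g : ℕ)) L (k + 1) q = τ q.1 q.2 := fun q =>
      simTile_encode L (k + 1) hL (eL (lab q.1)) (τ q.1) q.2
    have htab : ∀ g i t, tab (σ g) i t = ((lab g i t).1.1, (lab g i t).2) := by
      intro g i t
      have : (⟨(σ g : ℕ) % L, Nat.mod_lt _ hL⟩ : Fin L) = eL (lab g) := by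
        apply Fin.ext
        simp only [σ, Nat.add_mul_mod_self_left]
        exact Nat.mod_eq_of_lt (eL (lab g)).2
      simp only [tab, tab0, this, Equiv.symm_apply_apply]
    have htA : ∀ h, stTile (fun g => (σ g : ℕ)) L (k + 1) (ψ h, idx h) = x h + 1 := by
      intro h
      have ha : act (ψ h, idx h) := ⟨h, rfl, rfl⟩
      rw [htile]
      simp only [τ]
      rw [dif_pos ha, hhe]
      simp
    have htI : ∀ q, ¬ act q → stTile (fun g => (σ g : ℕ)) L (k + 1) q = 0 := by
      rintro ⟨g, i⟩ hq
      rw [htile]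
      simp only [τ]
      rw [dif_neg hq]
      simp
    have hstepA : ∀ h t, runStep πG tab (fun g => (σ g : ℕ)) (ψ h, idx h) t =
        (ψ (h * πH (FreeGroup.mk [t])), idx (h * πH (FreeGroup.mk [t]))) := by
      intro h t
      have ha : act (ψ h, idx h) := ⟨h, rfl, rfl⟩
      simp only [runStep, htab]
      simp only [lab]
      rw [dif_pos ha]
      simp only [hhe, ← hwd2]
    have hstepI : ∀ q, ¬ act q → ∀ t, runStep πG tab (fun g => (σ g : ℕ)) q t = q := by
      rintro ⟨g, i⟩ hq t
      simp only [runStep, htab]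
      simp only [lab]
      rw [dif_neg hq]
      simp [← FreeGroup.one_eq_mk]
    have hrunA : ∀ (w : QWd mH) h, runW πG tab (fun g => (σ g : ℕ)) (ψ h, idx h) w =
        (ψ (h * πH (FreeGroup.mk w)), idx (h * πH (FreeGroup.mk w))) := by
      intro w
      induction w with
      | nil => intro h; simp [runW, ← FreeGroup.one_eq_mk]
      | cons t w ih =>
        intro h
        have : FreeGroup.mk (t :: w) = FreeGroup.mk [t] * FreeGroup.mk w := by
          simp [FreeGroup.mul_mk]
        rw [this, map_mul, ← mul_assoc, ← ih, ← hstepA]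
        rfl
    have hrunI : ∀ (w : QWd mH) q, ¬ act q → runW πG tab (fun g => (σ g : ℕ)) q w = q := by
      intro w
      induction w with
      | nil => intro q _; rfl
      | cons t w ih =>
        intro q hq
        have := ih q hq
        rw [← hstepI q hq t] at this
        simp only [runW, List.foldl_cons] at this ⊢
        rw [this, hstepI q hq t]
    refine ⟨σ, (hsplit σ).2 ⟨?_, ?_, ?_⟩⟩
    · intro g
      obtain ⟨h, w, hw, hψ⟩ := hdense g
      refine ⟨w, (hW w).2 hw, ?_⟩
      rw [← hψ]
      by_contra! hlt
      have h1 := htA h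
      simp only [stTile, simTile, Nat.div_eq_of_lt hlt] at h1
      simp at h1
    · refine simRel_complete πG tab _ V N M (fun v h1 h2 => (hV v).2 ⟨h1, h2⟩) htabN Rl hM _ ?_
      rintro r hr q
      by_cases hq : act q
      · obtain ⟨h, h1, h2⟩ := hq
        obtain rfl : (ψ h, idx h) = q := Prod.ext h1 h2
        rw [hrunA]
        have : πH (FreeGroup.mk r) = 1 := by
          simp only [Rl, List.mem_append, List.mem_map, Finset.mem_toList, List.mem_flatMap,
            List.mem_finRange, true_and] at hr
          rcases hr with ⟨r0, hr0, rfl⟩ | ⟨j, hj⟩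
          · rw [FreeGroup.mk_toWord, ← MonoidHom.mem_ker, hR]
            exact Subgroup.subset_normalClosure hr0
          · have : FreeGroup.mk r = 1 := by
              simp only [List.mem_cons, List.not_mem_nil, or_false] at hj
              rcases hj with rfl | rfl
              · exact Quot.sound (FreeGroup.Red.Step.cons_not (L := []))
              · exact Quot.sound (FreeGroup.Red.Step.cons_not (L := []) (b := false))
            rw [this, map_one]
        rw [this, mul_one]
      · exact hrunI r q hq
    · intro q0 p hp
      rw [List.mem_append, mem_simAct_iff, mem_simShift_iff] at hp
      by_cases hq : act q0
      · obtain ⟨h, h1, h2⟩ := hq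
        obtain rfl : (ψ h, idx h) = q0 := Prod.ext h1 h2
        rcases hp with ⟨a, ha, t, rfl⟩ | ⟨p0, hp0, rfl⟩
        · refine ⟨([t], 0), by simp, ?_⟩
          rw [hrunA, htA]
          simp
        · obtain ⟨q, hq, hne⟩ := hx h p0 hp0
          refine ⟨(q.1, q.2 + 1), List.mem_map_of_mem hq, ?_⟩
          simp only [hrunA, htA]
          omega
      · rcases hp with ⟨a, ha, t, rfl⟩ | ⟨p0, hp0, rfl⟩
        · refine ⟨([], a + 1), by simp, ?_⟩
          rw [hrunI _ _ hq, htI _ hq]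
          simp
        · obtain ⟨q, hq', hne⟩ := hx 1 p0 hp0
          refine ⟨(q.1, q.2 + 1), List.mem_map_of_mem hq', ?_⟩
          rw [hrunI _ _ hq, htI _ hq]
          simp
  · -- from `G` to `H`
    rintro ⟨σ, hσ⟩
    obtain ⟨h5, h3, h4⟩ := (hsplit σ).1 hσ
    have hrel := simRel_sound πG tab (fun g => (σ g : ℕ)) V (fun v hv => ((hV v).1 hv).2) Rl
      (simK L n k) (fun g => (σ g).2) h3
    obtain ⟨w0, -, hw0⟩ := h5 1
    obtain ⟨i0, hi0⟩ := exists_tile_ne_zero (n := n) L (k + 1) _ (Nat.succ_pos k) hw0 hL (σ _).2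
    obtain ⟨st, hst1, hst⟩ := exists_orbit πG πH hπH R hR tab (fun g => (σ g : ℕ))
      (fun r hr q => hrel _ (by
        simp only [Rl, List.mem_append, List.mem_map, Finset.mem_toList]
        exact Or.inl ⟨r, hr, rfl⟩) q)
      (fun j b q => hrel _ (by
        simp only [Rl, List.mem_append, List.mem_flatMap, List.mem_finRange, true_and]
        right
        exact ⟨j, by cases b <;> simp⟩) q) (_, i0)
    have hlt : ∀ q : G × Fin n, stTile (fun g => (σ g : ℕ)) L (k + 1) q < k + 1 := fun q =>
      Nat.mod_lt _ (Nat.succ_pos k)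
    have hactrun : ∀ (w : QWd mH) (q : G × Fin n), stTile (fun g => (σ g : ℕ)) L (k + 1) q ≠ 0 →
        stTile (fun g => (σ g : ℕ)) L (k + 1) (runW πG tab (fun g => (σ g : ℕ)) q w) ≠ 0 := by
      intro w
      induction w with
      | nil => intro q hq; exact hq
      | cons t w ih =>
        intro q hq
        refine ih (runStep πG tab (fun g => (σ g : ℕ)) q t) ?_
        have hl := hlt q
        obtain ⟨e, he, hne⟩ := h4 q
          [([], (stTile (fun g => (σ g : ℕ)) L (k + 1) q - 1) + 1), ([t], 0)]
          (List.mem_append_left _ ((mem_simAct_iff _ _).2 ⟨_, by omega, t, rfl⟩))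
        simp only [List.mem_cons, List.not_mem_nil, or_false] at he
        rcases he with rfl | rfl
        · exfalso
          apply hne
          simp only [runW, List.foldl_nil]
          omega
        · exact hne
    have hact : ∀ h, stTile (fun g => (σ g : ℕ)) L (k + 1) (st h) ≠ 0 := by
      intro h
      obtain ⟨a, rfl⟩ := hπH h
      have := hst 1 a.toWord
      rw [FreeGroup.mk_toWord, one_mul] at this
      rw [this, hst1]
      exact hactrun _ _ hi0
    refine ⟨fun h => ⟨stTile (fun g => (σ g : ℕ)) L (k + 1) (st h) - 1, ?_⟩, ?_⟩
    · have h1 := hlt (st h)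
      have h2 := hact h
      omega
    · intro h p hp
      obtain ⟨q', hq', hne⟩ := h4 (st h) _ (List.mem_append_right _
        ((mem_simShift_iff _ _).2 ⟨p, hp, rfl⟩))
      obtain ⟨q, hq, rfl⟩ := List.mem_map.1 hq'
      refine ⟨q, hq, ?_⟩
      simp only at hne ⊢
      rw [← hst] at hne
      have h2 := hact (h * πH (FreeGroup.mk q.1))
      omega

end red

/-! ### Geometry -/

section geom

variable {G : Type*} [Group G] {m : ℕ} (π : FreeGroup (Fin m) →* G)

theorem mk_singleton_mem (t : Fin m × Bool) : π (FreeGroup.mk [t]) ∈ markedGens π := by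
  obtain ⟨j, b⟩ := t
  refine ⟨j, ?_⟩
  cases b
  · right
    rw [← map_inv]
    rfl
  · left
    rfl

theorem exists_walk_of_word (w : QWd m) : ∀ x : G,
    ∃ p : (cayley (markedGens π)).Walk x (x * π (FreeGroup.mk w)), p.length ≤ w.length := by
  induction w with
  | nil =>
    intro x
    refine ⟨SimpleGraph.Walk.nil.copy rfl ?_, ?_⟩
    · simp [← FreeGroup.one_eq_mk]
    · simp
  | cons t w ih =>
    intro x
    have h : FreeGroup.mk (t :: w) = FreeGroup.mk [t] * FreeGroup.mk w := by
      simp [FreeGroup.mul_mk]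
    obtain ⟨p, hp⟩ := ih (x * π (FreeGroup.mk [t]))
    have he : x * π (FreeGroup.mk [t]) * π (FreeGroup.mk w) = x * π (FreeGroup.mk (t :: w)) := by
      rw [h, map_mul, mul_assoc]
    by_cases hx : x = x * π (FreeGroup.mk [t])
    · refine ⟨p.copy hx.symm he, ?_⟩
      simp only [SimpleGraph.Walk.length_copy, List.length_cons]
      omega
    · have hadj : (cayley (markedGens π)).Adj x (x * π (FreeGroup.mk [t])) := by
        rw [cayley, SimpleGraph.fromRel_adj]
        exact ⟨hx, Or.inl (by simpa using mk_singleton_mem π t)⟩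
      refine ⟨(SimpleGraph.Walk.cons hadj p).copy rfl he, ?_⟩
      simp only [SimpleGraph.Walk.length_copy, SimpleGraph.Walk.length_cons, List.length_cons]
      omega

theorem exists_word_of_walk {x y : G} (p : (cayley (markedGens π)).Walk x y) :
    ∃ w : QWd m, w.length ≤ p.length ∧ y = x * π (FreeGroup.mk w) := by
  induction p with
  | nil => exact ⟨[], by simp, by simp [← FreeGroup.one_eq_mk]⟩
  | @cons u v y hadj p ih =>
    obtain ⟨w, hw, rfl⟩ := ih
    rw [cayley, SimpleGraph.fromRel_adj] at hadj
    have : ∃ t, v = u * π (FreeGroup.mk [t]) := by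
      have h1 : ∀ j : Fin m, FreeGroup.mk [(j, true)] = FreeGroup.of j := fun j => rfl
      have h2 : ∀ j : Fin m, FreeGroup.mk [(j, false)] = (FreeGroup.of j)⁻¹ := fun j => rfl
      rcases hadj.2 with ⟨j, h | h⟩ | ⟨j, h | h⟩
      · exact ⟨(j, true), by rw [h1, ← h]; group⟩
      · exact ⟨(j, false), by rw [h2, map_inv, ← h]; group⟩
      · exact ⟨(j, false), by rw [h2, map_inv, ← h]; group⟩
      · exact ⟨(j, true), by rw [h1, ← inv_inv (π _), ← h]; group⟩
    obtain ⟨t, rfl⟩ := this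
    refine ⟨t :: w, by simpa using hw, ?_⟩
    rw [mul_assoc, ← map_mul, FreeGroup.mul_mk]
    rfl

theorem cayley_connected (hπ : Function.Surjective π) (x y : G) :
    (cayley (markedGens π)).Reachable x y := by
  obtain ⟨a, ha⟩ := hπ (x⁻¹ * y)
  obtain ⟨p, -⟩ := exists_walk_of_word π a.toWord x
  rw [FreeGroup.mk_toWord, ha, mul_inv_cancel_left] at p
  exact ⟨p⟩

theorem cayley_dist_le_iff (hπ : Function.Surjective π) (x y : G) (N : ℕ) :
    (cayley (markedGens π)).dist x y ≤ N ↔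
      ∃ w : QWd m, w.length ≤ N ∧ y = x * π (FreeGroup.mk w) := by
  constructor
  · intro h
    obtain ⟨p, hp⟩ := (cayley_connected π hπ x y).exists_walk_length_eq_dist
    obtain ⟨w, hw, h2⟩ := exists_word_of_walk π p
    exact ⟨w, by omega, h2⟩
  · rintro ⟨w, hw, rfl⟩
    obtain ⟨p, hp⟩ := exists_walk_of_word π w x
    exact (SimpleGraph.dist_le p).trans (hp.trans hw)

theorem cayley_dist_triangle (hπ : Function.Surjective π) (x y z : G) :
    (cayley (markedGens π)).dist x z ≤
      (cayley (markedGens π)).dist x y + (cayley (markedGens π)).dist y z := by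
  have hc : (cayley (markedGens π)).Connected :=
    { preconnected := fun x y => cayley_connected π hπ x y
      nonempty := ⟨1⟩ }
  exact hc.dist_triangle

theorem exists_index {X : Type*} (hπ : Function.Surjective π) (ψ : G → X) (N : ℕ)
    (hfib : ∀ h h', ψ h = ψ h' → (cayley (markedGens π)).dist h h' ≤ N) :
    ∃ (n : ℕ) (idx : G → Fin n), ∀ h h', ψ h = ψ h' → idx h = idx h' → h = h' := by
  classical
  have : Finite {w : QWd m // w.length ≤ N} := finite_words m N
  have : Fintype {w : QWd m // w.length ≤ N} := Fintype.ofFinite _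
  have hc : ∀ h, ∃ h0, ψ h0 = ψ h := fun h => ⟨h, rfl⟩
  let c : X → G := fun x => if hx : ∃ h, ψ h = x then hx.choose else 1
  have hcs : ∀ h, ψ (c (ψ h)) = ψ h := by
    intro h
    have hx : ∃ h', ψ h' = ψ h := ⟨h, rfl⟩
    simp only [c]
    rw [dif_pos hx]
    exact hx.choose_spec
  have hw : ∀ h, ∃ w : {w : QWd m // w.length ≤ N}, h = c (ψ h) * π (FreeGroup.mk w.1) := by
    intro h
    obtain ⟨w, h1, h2⟩ := (cayley_dist_le_iff π hπ _ _ _).1 (hfib _ _ (hcs h))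
    exact ⟨⟨w, h1⟩, h2⟩
  choose wd hwd using hw
  refine ⟨_, fun h => Fintype.equivFin _ (wd h), ?_⟩
  intro h h' h1 h2
  have h3 := (Fintype.equivFin _).injective h2
  rw [hwd h, hwd h', h1, h3]

end geom

/-- Transfer, stated with distances. -/
theorem domino_transfer_dist {G H : Type*} [Group G] [Group H] {mG mH : ℕ}
    (πG : FreeGroup (Fin mG) →* G) (πH : FreeGroup (Fin mH) →* H)
    (hπG : Function.Surjective πG) (hπH : Function.Surjective πH)
    (hHfp : ∃ R : Finset (FreeGroup (Fin mH)),
      πH.ker = Subgroup.normalClosure (R : Set (FreeGroup (Fin mH))))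
    (ψ : H → G) (N : ℕ)
    (hfib : ∀ h h', ψ h = ψ h' → (cayley (markedGens πH)).dist h h' ≤ N)
    (hlip : ∀ h h', (cayley (markedGens πH)).dist h h' ≤ 1 →
      (cayley (markedGens πG)).dist (ψ h) (ψ h') ≤ N)
    (hdense : ∀ g, ∃ h, (cayley (markedGens πG)).dist g (ψ h) ≤ N) :
    HasDecidableDomino πG → HasDecidableDomino πH := by
  obtain ⟨R, hR⟩ := hHfp
  obtain ⟨n, idx, hidx⟩ := exists_index πH hπH ψ N hfib
  refine domino_transfer πG πH hπH R hR ψ N idx hidx ?_ ?_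
  · intro h t
    exact (cayley_dist_le_iff πG hπG _ _ _).1 (hlip _ _
      ((cayley_dist_le_iff πH hπH _ _ _).2 ⟨[t], by simp, rfl⟩))
  · intro g
    obtain ⟨h, hh⟩ := hdense g
    exact ⟨h, (cayley_dist_le_iff πG hπG _ _ _).1 hh⟩

/-- decidability of the domino problem is a quasi-isometry invariant of finitely
presented groups.  `G` and `H` are given by markings `πG`, `πH` (surjections from finitely
generated free groups) whose kernels are normally generated by finitely many relators, and
the quasi-isometry is with respect to the associated word metrics. -/
theorem stmt1 {G H : Type*} [Group G] [Group H] {mG mH : ℕ}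
    (πG : FreeGroup (Fin mG) →* G) (πH : FreeGroup (Fin mH) →* H)
    (hπG : Function.Surjective πG) (hπH : Function.Surjective πH)
    (hGfp : ∃ R : Finset (FreeGroup (Fin mG)),
      πG.ker = Subgroup.normalClosure (R : Set (FreeGroup (Fin mG))))
    (hHfp : ∃ R : Finset (FreeGroup (Fin mH)),
      πH.ker = Subgroup.normalClosure (R : Set (FreeGroup (Fin mH))))
    (hqi : ∃ f : G → H, IsQI (markedGens πG) (markedGens πH) f) :
    HasDecidableDomino πG ↔ HasDecidableDomino πH := by
  obtain ⟨f, n, hn, hqi, hsurj⟩ := hqi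
  have hup : ∀ x y, (cayley (markedGens πH)).dist (f x) (f y) ≤
      n * (cayley (markedGens πG)).dist x y + n := by
    intro x y
    exact_mod_cast (hqi x y).2
  have hlow : ∀ x y, (cayley (markedGens πG)).dist x y ≤
      n * ((cayley (markedGens πH)).dist (f x) (f y) + n) := by
    intro x y
    have h1 := (hqi x y).1
    have hn' : (0 : ℝ) < n := by exact_mod_cast hn
    rw [sub_le_iff_le_add, div_le_iff₀ hn'] at h1
    have h2 : ((cayley (markedGens πG)).dist x y : ℝ) ≤
      n * ((cayley (markedGens πH)).dist (f x) (f y) + n) := by linarith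
    exact_mod_cast h2
  constructor
  · -- a coarse inverse of `f`
    choose ψ hψ using hsurj
    have htri : ∀ h h', (cayley (markedGens πH)).dist (f (ψ h)) (f (ψ h')) ≤
        2 * n + (cayley (markedGens πH)).dist h h' := by
      intro h h'
      have h1 := cayley_dist_triangle πH hπH (f (ψ h)) h (f (ψ h'))
      have h2 := cayley_dist_triangle πH hπH h h' (f (ψ h'))
      have h3 := hψ h
      have h4 := hψ h'
      rw [SimpleGraph.dist_comm] at h4
      omega
    have hbig : 2 * n ≤ n * (2 * n + 1 + n) := by nlinarith
    refine domino_transfer_dist πG πH hπG hπH hHfp ψ (n * (2 * n + 1 + n)) ?_ ?_ ?_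
    · intro h h' he
      have h1 := cayley_dist_triangle πH hπH h (f (ψ h)) h'
      have h3 := hψ h
      have h4 := hψ h'
      rw [SimpleGraph.dist_comm] at h3
      rw [← he] at h4
      omega
    · intro h h' h1
      refine (hlow _ _).trans (Nat.mul_le_mul_left n ?_)
      have := htri h h'
      omega
    · intro g
      refine ⟨f g, (hlow _ _).trans (Nat.mul_le_mul_left n ?_)⟩
      have := hψ (f g)
      rw [SimpleGraph.dist_comm] at this
      omega
  · have hbig : n * (0 + n) ≤ n * n + 2 * n := by nlinarith
    refine domino_transfer_dist πH πG hπH hπG hGfp f (n * n + 2 * n) ?_ ?_ ?_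
    · intro h h' he
      have := hlow h h'
      rw [he, SimpleGraph.dist_self] at this
      omega
    · intro h h' h1
      have h2 := hup h h'
      have h3 := Nat.mul_le_mul_left n h1
      nlinarith
    · intro g
      obtain ⟨h, hh⟩ := hsurj g
      refine ⟨h, ?_⟩
      rw [SimpleGraph.dist_comm]
      nlinarith
end

section
/- Let G be a finitely presented group admitting no weakly aperiodic subshift of finite type, and let H be a finitely presented group quasi-isometric to G. Then there exist a finite-index subgroup G₀ ≤ G, a finite-index subgroup H₀ ≤ H, and a finite normal subgroup K ⊴ G₀ such that H₀ is isomorphic to the quotient G₀/K. -/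
/-- The product in `G` of (the letters of) a word over `S`. -/
def wordProd {G : Type*} [Group G] (S : Finset G) (w : List ↥S) : G :=
  (w.map (fun s => (s : G))).prod

/-- An elementary homotopy move between words over `S`: replace a subword `v` of length at
most `K` by a word `v'` of length at most `K` representing the same element of `G`. -/
def ElemMove {G : Type*} [Group G] (S : Finset G) (K : ℕ) (w₁ w₂ : List ↥S) : Prop :=
  ∃ u v v' x : List ↥S, w₁ = u ++ v ++ x ∧ w₂ = u ++ v' ++ x ∧
    v.length ≤ K ∧ v'.length ≤ K ∧ wordProd S v = wordProd S v'

/-- `G` is presented over the (symmetric) generating set `S` by relators of length at most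
`K`: any two words over `S` representing the same element of `G` are connected by a finite
sequence of elementary moves of size at most `K`. -/
def PresentedBy {G : Type*} [Group G] (S : Finset G) (K : ℕ) : Prop :=
  ∀ w w' : List ↥S, wordProd S w = wordProd S w' →
    Relation.ReflTransGen (ElemMove S K) w w'

/-- `X ⊆ A^G` is a subshift of finite type: there is a finite family of forbidden patterns
`p i : F i → A` (`F i ⊆ G` finite) such that `X` consists exactly of those `σ` for which no
translate `σ·g = (x ↦ σ (g * x))` restricts on `F i` to `p i`. -/
def IsSFT {G A : Type*} [Group G] (X : Set (G → A)) : Prop :=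
  ∃ (ι : Type) (_ : Finite ι) (F : ι → Finset G) (p : (i : ι) → (↥(F i) → A)),
    X = {σ : G → A | ∀ (g : G) (i : ι), ∃ x : ↥(F i), σ (g * ↑x) ≠ p i x}

/-- The stabilizer of a configuration `σ : G → A` under the shift action
`(σ·g)(x) = σ(g*x)`. -/
def shiftStab {G A : Type*} [Group G] (σ : G → A) : Subgroup G where
  carrier := {g : G | ∀ x : G, σ (g * x) = σ x}
  one_mem' := by intro x; simp
  mul_mem' := by
    intro a b ha hb x
    rw [mul_assoc, ha, hb]
  inv_mem' := by
    intro a ha x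
    have h := ha (a⁻¹ * x)
    rw [mul_inv_cancel_left] at h
    exact h.symm

/-- `G` admits a weakly aperiodic subshift of finite type: a nonempty SFT on a finite
alphabet all of whose points have stabilizer of infinite index in `G`
(`index = 0` encodes infinite index). -/
def HasWeaklyAperiodicSFT (G : Type*) [Group G] : Prop :=
  ∃ (A : Type) (_ : Finite A) (X : Set (G → A)), IsSFT X ∧ X.Nonempty ∧
    ∀ σ ∈ X, (shiftStab σ).index = 0

/-- Elements represented by words over `S` of length at most `r`. -/
def wBall {G : Type*} [Group G] (S : Finset G) (r : ℕ) : Set G :=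
  {u | ∃ w : List ↥S, w.length ≤ r ∧ wordProd S w = u}

section balls
variable {G : Type*} [Group G] {S : Finset G}

lemma wordProd_nil' : wordProd S [] = 1 := by simp [wordProd]

lemma wordProd_cons' (s : ↥S) (w : List ↥S) : wordProd S (s :: w) = s * wordProd S w := by
  simp [wordProd]

lemma wordProd_append' (w w' : List ↥S) :
    wordProd S (w ++ w') = wordProd S w * wordProd S w' := by
  simp [wordProd]

lemma wBall_one (r : ℕ) : (1 : G) ∈ wBall S r := ⟨[], by simp, wordProd_nil'⟩

lemma wBall_mono {r r' : ℕ} (h : r ≤ r') {u : G} (hu : u ∈ wBall S r) : u ∈ wBall S r' := by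
  obtain ⟨w, hw, rfl⟩ := hu
  exact ⟨w, hw.trans h, rfl⟩

lemma wBall_mul {r r' : ℕ} {u v : G} (hu : u ∈ wBall S r) (hv : v ∈ wBall S r') :
    u * v ∈ wBall S (r + r') := by
  obtain ⟨w, hw, rfl⟩ := hu
  obtain ⟨w', hw', rfl⟩ := hv
  exact ⟨w ++ w', by simp; omega, wordProd_append' _ _⟩

lemma wBall_gen {s : G} (hs : s ∈ S) : s ∈ wBall S 1 :=
  ⟨[⟨s, hs⟩], by simp, by simp [wordProd]⟩

lemma wBall_inv (hS : ∀ s ∈ S, s⁻¹ ∈ S) {r : ℕ} {u : G} (hu : u ∈ wBall S r) :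
    u⁻¹ ∈ wBall S r := by
  obtain ⟨w, hw, rfl⟩ := hu
  induction w generalizing r with
  | nil => rw [wordProd_nil', inv_one]; exact wBall_one r
  | cons s w ih =>
    rw [wordProd_cons', mul_inv_rev]
    have h1 : w.length ≤ w.length := le_rfl
    have := wBall_mul (ih h1) (wBall_gen (hS s s.2))
    exact wBall_mono (by simpa using hw) this

lemma wBall_finite (r : ℕ) : (wBall S r).Finite := by
  have h := (List.finite_length_le (↥S) r).image (wordProd S)
  refine h.subset ?_
  rintro u ⟨w, hw, rfl⟩
  exact ⟨w, hw, rfl⟩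

lemma exists_word (hS : ∀ s ∈ S, s⁻¹ ∈ S) (hgen : Subgroup.closure (S : Set G) = ⊤) (u : G) :
    ∃ w : List ↥S, wordProd S w = u := by
  have hu : u ∈ Subgroup.closure (S : Set G) := by rw [hgen]; trivial
  induction hu using Subgroup.closure_induction with
  | mem x hx => exact ⟨[⟨x, hx⟩], by simp [wordProd]⟩
  | one => exact ⟨[], wordProd_nil'⟩
  | mul x y _ _ hx hy =>
    obtain ⟨w, rfl⟩ := hx
    obtain ⟨w', rfl⟩ := hy
    exact ⟨w ++ w', wordProd_append' _ _⟩
  | inv x _ hx =>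
    obtain ⟨w, rfl⟩ := hx
    obtain ⟨w', _, hw'⟩ := wBall_inv hS (⟨w, le_rfl, rfl⟩ : wordProd S w ∈ wBall S w.length)
    exact ⟨w', hw'⟩

lemma walk_mem_wBall (hS : ∀ s ∈ S, s⁻¹ ∈ S) {x y : G} (p : (cayley (S : Set G)).Walk x y) :
    x⁻¹ * y ∈ wBall S p.length := by
  induction p with
  | nil => simpa using wBall_one 0
  | @cons a b c h p ih =>
    have hab : a⁻¹ * b ∈ S := by
      rw [cayley, SimpleGraph.fromRel_adj] at h
      rcases h.2 with h | h
      · exact h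
      · have := hS _ h
        simpa using this
    have := wBall_mul (wBall_gen hab) ih
    have e : a⁻¹ * b * (b⁻¹ * c) = a⁻¹ * c := by group
    rw [e] at this
    exact wBall_mono (by simp; omega) this

lemma exists_walk (x : G) (w : List ↥S) :
    ∃ p : (cayley (S : Set G)).Walk x (x * wordProd S w), p.length ≤ w.length := by
  induction w generalizing x with
  | nil =>
    rw [wordProd_nil', mul_one]
    exact ⟨SimpleGraph.Walk.nil, by simp⟩
  | cons s w ih =>
    rw [wordProd_cons', ← mul_assoc]
    by_cases hs : x = x * s
    · rw [← hs]
      obtain ⟨p, hp⟩ := ih x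
      exact ⟨p, by simp; omega⟩
    · obtain ⟨p, hp⟩ := ih (x * s)
      have hadj : (cayley (S : Set G)).Adj x (x * s) := by
        rw [cayley, SimpleGraph.fromRel_adj]
        exact ⟨hs, Or.inl (by simp)⟩
      exact ⟨SimpleGraph.Walk.cons hadj p, by simpa using hp⟩

lemma dist_le_of_mem {r : ℕ} {x y : G} (h : x⁻¹ * y ∈ wBall S r) :
    (cayley (S : Set G)).dist x y ≤ r := by
  obtain ⟨w, hw, h⟩ := h
  obtain ⟨p, hp⟩ := exists_walk x w
  have e : x * wordProd S w = y := by rw [h]; group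
  rw [← e]
  exact (SimpleGraph.dist_le p).trans (hp.trans hw)

lemma mem_of_dist_le (hS : ∀ s ∈ S, s⁻¹ ∈ S) (hgen : Subgroup.closure (S : Set G) = ⊤)
    {r : ℕ} {x y : G} (h : (cayley (S : Set G)).dist x y ≤ r) : x⁻¹ * y ∈ wBall S r := by
  obtain ⟨w, hw⟩ := exists_word hS hgen (x⁻¹ * y)
  obtain ⟨p, -⟩ := exists_walk x w
  have e : x * wordProd S w = y := by rw [hw]; group
  rw [e] at p
  obtain ⟨q, hq⟩ := p.reachable.exists_walk_length_eq_dist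
  exact wBall_mono (hq.le.trans h) (walk_mem_wBall hS q)

end balls

/-- Sets defined by a condition on a finite window are SFTs. -/
lemma isSFT_of_window {G A : Type*} [Group G] [Finite A] (F : Finset G)
    (Q : (↥F → A) → Prop) :
    IsSFT {σ : G → A | ∀ g, Q (fun x => σ (g * x))} := by
  have : Finite {p : ↥F → A // ¬ Q p} := inferInstance
  obtain ⟨k, ⟨e⟩⟩ := Finite.exists_equiv_fin {p : ↥F → A // ¬ Q p}
  refine ⟨Fin k, inferInstance, fun _ => F, fun i => (e.symm i).1, ?_⟩
  ext σ
  simp only [Set.mem_ofPred_eq]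
  constructor
  · intro h g i
    by_contra! hc
    apply (e.symm i).2
    have : (e.symm i).1 = fun x : ↥F => σ (g * x) := by
      funext x; exact (hc x).symm
    rw [this]; exact h g
  · intro h g
    by_contra hc
    obtain ⟨x, hx⟩ := h g (e ⟨_, hc⟩)
    simp at hx

section core
variable {G H : Type*} [Group G] [Group H] {S : Finset G} {T : Finset H}

/-- Product of labels along a word starting at `g`. -/
def hol (l : G → ↥S → H) : G → List ↥S → H
  | _, [] => 1
  | g, s :: w => l g s * hol l (g * s) w

lemma hol_append (l : G → ↥S → H) (g : G) (u v : List ↥S) :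
    hol l g (u ++ v) = hol l g u * hol l (g * wordProd S u) v := by
  induction u generalizing g with
  | nil => simp [hol, wordProd_nil']
  | cons s u ih => simp [hol, ih, wordProd_cons', mul_assoc]

lemma hol_elem {l : G → ↥S → H} {K : ℕ}
    (hl : ∀ g v v', v.length ≤ K → v'.length ≤ K → wordProd S v = wordProd S v' →
      hol l g v = hol l g v') {g : G} {w w' : List ↥S} (h : ElemMove S K w w') :
    hol l g w = hol l g w' := by
  obtain ⟨u, v, v', x, rfl, rfl, h1, h2, h3⟩ := h
  simp only [hol_append, wordProd_append', h3, hl _ v v' h1 h2 h3]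

lemma hol_eq {l : G → ↥S → H} {K : ℕ} (hK : PresentedBy S K)
    (hl : ∀ g v v', v.length ≤ K → v'.length ≤ K → wordProd S v = wordProd S v' →
      hol l g v = hol l g v') {g : G} {w w' : List ↥S} (h : wordProd S w = wordProd S w') :
    hol l g w = hol l g w' := by
  have hr := hK w w' h
  clear h
  induction hr with
  | refl => rfl
  | tail _ h2 ih => exact ih.trans (hol_elem hl h2)

/-- If the labels agree with a potential near `g`, so do the holonomies. -/
lemma hol_local {l : G → ↥S → H} {R : ℕ} {g : G} {f' : G → H}
    (h : ∀ x ∈ wBall S R, ∀ s : ↥S, l (g * x) s = (f' x)⁻¹ * f' (x * s))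
    (u w : List ↥S) (hw : u.length + w.length ≤ R) :
    hol l (g * wordProd S u) w = (f' (wordProd S u))⁻¹ * f' (wordProd S u * wordProd S w) := by
  induction w generalizing u with
  | nil => simp [hol, wordProd_nil']
  | cons s w ih =>
    have e : wordProd S (u ++ [s]) = wordProd S u * s := by
      simp [wordProd_append', wordProd_cons', wordProd_nil']
    have h1 := ih (u ++ [s]) (by simp at hw ⊢; omega)
    rw [e] at h1
    rw [hol, h _ ⟨u, by omega, rfl⟩, mul_assoc g, h1, wordProd_cons']
    group

/-- Uniform coarse properties of a quasi-isometry. -/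
def Good (S : Finset G) (T : Finset H) (m r : ℕ) (f : G → H) : Prop :=
  (∀ g, ∀ s ∈ S, (f g)⁻¹ * f (g * s) ∈ wBall T m) ∧
  (∀ g, ∀ b ∈ wBall T m, ∀ t ∈ T, ∃ c ∈ wBall S r, ∃ b' ∈ wBall T m,
    f g * b * t = f (g * c) * b') ∧
  (∀ g u, ∀ b ∈ wBall T m, ∀ b' ∈ wBall T m, f g * b = f (g * u) * b' → u ∈ wBall S r)

lemma Good.shift {m r : ℕ} {f : G → H} (h : Good S T m r f) (g : G) :
    Good S T m r (fun x => f (g * x)) := by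
  obtain ⟨h1, h2, h3⟩ := h
  refine ⟨fun x s hs => ?_, fun x b hb t ht => ?_, fun x u b hb b' hb' e => ?_⟩
  · simpa [mul_assoc] using h1 (g * x) s hs
  · simpa [mul_assoc] using h2 (g * x) b hb t ht
  · exact h3 (g * x) u b hb b' hb' (by simpa [mul_assoc] using e)

lemma IsQI.good (hSsym : ∀ s ∈ S, s⁻¹ ∈ S) (hSgen : Subgroup.closure (S : Set G) = ⊤)
    (hTsym : ∀ t ∈ T, t⁻¹ ∈ T) (hTgen : Subgroup.closure (T : Set H) = ⊤)
    {f : G → H} (hf : IsQI (S : Set G) (T : Set H) f) : ∃ m r, Good S T m r f := by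
  obtain ⟨n, hn, hqi, hsurj⟩ := hf
  have key : ∀ x y, (f x)⁻¹ * f y ∈ wBall T (4 * n + 1) →
      x⁻¹ * y ∈ wBall S (n * (5 * n + 1)) := by
    intro x y h
    apply mem_of_dist_le hSsym hSgen
    have h1 := dist_le_of_mem h
    have h2 := (hqi x y).1
    have hn' : (0 : ℝ) < n := by exact_mod_cast hn
    have h1' : ((cayley (T : Set H)).dist (f x) (f y) : ℝ) ≤ 4 * n + 1 := by exact_mod_cast h1
    have h3 : ((cayley (S : Set G)).dist x y : ℝ) / n ≤ 5 * n + 1 := by linarith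
    rw [div_le_iff₀ hn'] at h3
    have h4 : ((cayley (S : Set G)).dist x y : ℝ) ≤ ((n * (5 * n + 1) : ℕ) : ℝ) := by
      push_cast; linarith
    exact_mod_cast h4
  refine ⟨2 * n, n * (5 * n + 1), fun g s hs => ?_, fun g b hb t ht => ?_,
    fun g u b hb b' hb' e => ?_⟩
  · apply mem_of_dist_le hTsym hTgen
    have h1 : (cayley (S : Set G)).dist g (g * s) ≤ 1 :=
      dist_le_of_mem (by simpa using wBall_gen hs)
    have h2 := (hqi g (g * s)).2
    have h1' : ((cayley (S : Set G)).dist g (g * s) : ℝ) ≤ 1 := by exact_mod_cast h1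
    have h3 : ((cayley (T : Set H)).dist (f g) (f (g * s)) : ℝ) ≤ ((2 * n : ℕ) : ℝ) := by
      push_cast
      have : (n : ℝ) * ((cayley (S : Set G)).dist g (g * s) : ℝ) ≤ n * 1 := by gcongr
      linarith
    exact_mod_cast h3
  · obtain ⟨g', hg'⟩ := hsurj (f g * b * t)
    have hb' : (f g')⁻¹ * (f g * b * t) ∈ wBall T n := mem_of_dist_le hTsym hTgen hg'
    refine ⟨g⁻¹ * g', key g g' ?_, _, wBall_mono (by omega) hb', by simp⟩
    have := wBall_mul (wBall_mul hb (wBall_gen ht)) (wBall_inv hTsym hb')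
    have e : b * t * ((f g')⁻¹ * (f g * b * t))⁻¹ = (f g)⁻¹ * f g' := by group
    rw [e] at this
    exact wBall_mono (by omega) this
  · have := key g (g * u) ?_
    · simpa using this
    · have h1 := wBall_mul hb (wBall_inv hTsym hb')
      have e2 : (f g)⁻¹ * f (g * u) = b * b'⁻¹ := by
        rw [eq_mul_inv_iff_mul_eq, mul_assoc, ← e]; group
      rw [e2]
      exact wBall_mono (by omega) h1

/-- Run a step function along a word. -/
def run (step : G → H → ↥T → G) : List ↥T → G → H → G
  | [], g, _ => g
  | t :: w, g, h => run step w (step g h t) (h * t)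

lemma run_append (step : G → H → ↥T → G) (u v : List ↥T) (g : G) (h : H) :
    run step (u ++ v) g h = run step v (run step u g h) (h * wordProd T u) := by
  induction u generalizing g h with
  | nil => simp [run, wordProd_nil']
  | cons t u ih => simp [run, ih, wordProd_cons', mul_assoc]

/-- Local-to-global principle for quasi-isometries. -/
lemma core_lemma (hSsym : ∀ s ∈ S, s⁻¹ ∈ S) (hSgen : Subgroup.closure (S : Set G) = ⊤)
    (hTsym : ∀ t ∈ T, t⁻¹ ∈ T) (hTgen : Subgroup.closure (T : Set H) = ⊤)
    {K m r R : ℕ} (hK : PresentedBy T K) (hR1 : 3 * r ≤ R) (hR2 : 2 * (r * K) ≤ R)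
    (hR3 : r + r * m + 1 ≤ R) {f : G → H} (f1 : f 1 = 1)
    (h1 : ∀ g, ∀ s ∈ S, (f g)⁻¹ * f (g * s) ∈ wBall T m)
    (h2 : ∀ g, ∀ b ∈ wBall T m, ∀ t ∈ T, ∃ c ∈ wBall S r, ∃ b' ∈ wBall T m,
      f g * b * t = f (g * c) * b')
    (h3 : ∀ g, ∀ u ∈ wBall S R, ∀ b ∈ wBall T m, ∀ b' ∈ wBall T m,
      f g * b = f (g * u) * b' → u ∈ wBall S r) :
    (∀ h, ∃ g, (f g)⁻¹ * h ∈ wBall T m) ∧ (∀ x, f x = 1 → x ∈ wBall S r) := by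
  have hstep : ∀ (g : G) (h : H) (t : ↥T), ∃ g' : G, (f g)⁻¹ * h ∈ wBall T m →
      g⁻¹ * g' ∈ wBall S r ∧ (f g')⁻¹ * (h * t) ∈ wBall T m := by
    intro g h t
    by_cases hE : (f g)⁻¹ * h ∈ wBall T m
    · obtain ⟨c, hc, b', hb', e⟩ := h2 g _ hE t t.2
      refine ⟨g * c, fun _ => ⟨by simpa using hc, ?_⟩⟩
      have : (f (g * c))⁻¹ * (h * t) = b' := by
        rw [inv_mul_eq_iff_eq_mul, ← e]; group
      rwa [this]
    · exact ⟨1, fun h => absurd h hE⟩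
  choose step hstep using hstep
  have E_run : ∀ (w : List ↥T) (g : G) (h : H), (f g)⁻¹ * h ∈ wBall T m →
      (f (run step w g h))⁻¹ * (h * wordProd T w) ∈ wBall T m := by
    intro w
    induction w with
    | nil => intro g h hE; simpa [run, wordProd_nil'] using hE
    | cons t w ih =>
      intro g h hE
      have := ih _ _ (hstep g h t hE).2
      simpa [run, wordProd_cons', mul_assoc] using this
  have run_dist : ∀ (w : List ↥T) (g : G) (h : H), (f g)⁻¹ * h ∈ wBall T m →
      g⁻¹ * run step w g h ∈ wBall S (r * w.length) := by
    intro w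
    induction w with
    | nil => intro g h hE; simpa [run] using wBall_one 0
    | cons t w ih =>
      intro g h hE
      have h5 := ih _ _ (hstep g h t hE).2
      have h6 := wBall_mul (hstep g h t hE).1 h5
      have e : g⁻¹ * step g h t * ((step g h t)⁻¹ * run step w (step g h t) (h * t))
          = g⁻¹ * run step w (step g h t) (h * t) := by group
      rw [e] at h6
      refine wBall_mono ?_ h6
      simp [mul_add]; omega
  have close : ∀ (g g' : G) (h : H), (f g)⁻¹ * h ∈ wBall T m → (f g')⁻¹ * h ∈ wBall T m →
      g⁻¹ * g' ∈ wBall S R → g⁻¹ * g' ∈ wBall S r := by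
    intro g g' h hE hE' hu
    exact h3 g _ hu _ hE _ hE' (by simp)
  have run_close : ∀ (w : List ↥T) (g g' : G) (h : H), (f g)⁻¹ * h ∈ wBall T m →
      (f g')⁻¹ * h ∈ wBall T m → g⁻¹ * g' ∈ wBall S r →
      (run step w g h)⁻¹ * run step w g' h ∈ wBall S r := by
    intro w
    induction w with
    | nil => intro g g' h _ _ hu; simpa [run] using hu
    | cons t w ih =>
      intro g g' h hE hE' hu
      have a := hstep g h t hE
      have a' := hstep g' h t hE'
      refine ih _ _ _ a.2 a'.2 (close _ _ _ a.2 a'.2 ?_)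
      have := wBall_mul (wBall_mul (wBall_inv hSsym a.1) hu) a'.1
      have e : (g⁻¹ * step g h t)⁻¹ * (g⁻¹ * g') * (g'⁻¹ * step g' h t)
          = (step g h t)⁻¹ * step g' h t := by group
      rw [e] at this
      exact wBall_mono (by omega) this
  have elem : ∀ (w w' : List ↥T) (g : G) (h : H), ElemMove T K w w' → (f g)⁻¹ * h ∈ wBall T m →
      (run step w g h)⁻¹ * run step w' g h ∈ wBall S r := by
    rintro _ _ g h ⟨u, v, v', x, rfl, rfl, l1, l2, l3⟩ hE
    simp only [run_append, wordProd_append', l3]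
    have e0 := E_run u g h hE
    have e1 := E_run v _ _ e0
    have e2 := E_run v' _ _ e0
    rw [l3] at e1
    have eh : h * (wordProd T u * wordProd T v') = h * wordProd T u * wordProd T v' := by group
    rw [eh]
    have d1 := run_dist v _ _ e0
    have d2 := run_dist v' _ _ e0
    refine run_close _ _ _ _ e1 e2 (close _ _ _ e1 e2 ?_)
    have := wBall_mul (wBall_inv hSsym d1) d2
    rw [mul_inv_rev, inv_inv, mul_assoc, mul_inv_cancel_left] at this
    refine wBall_mono ?_ this
    have := Nat.mul_le_mul_left r l1
    have := Nat.mul_le_mul_left r l2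
    omega
  have rtg : ∀ (w w' : List ↥T) (g : G) (h : H), Relation.ReflTransGen (ElemMove T K) w w' →
      (f g)⁻¹ * h ∈ wBall T m →
      wordProd T w = wordProd T w' ∧ (run step w g h)⁻¹ * run step w' g h ∈ wBall S r := by
    intro w w' g h hw hE
    induction hw with
    | refl => exact ⟨rfl, by simpa using wBall_one r⟩
    | @tail a b _ hb ih =>
      have hp : wordProd T a = wordProd T b := by
        obtain ⟨u, v, v', x, rfl, rfl, l1, l2, l3⟩ := hb
        simp only [wordProd_append', l3]
      have hp' := ih.1.trans hp
      refine ⟨hp', close _ _ (h * wordProd T w) (E_run w g h hE) ?_ ?_⟩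
      · rw [hp']; exact E_run b g h hE
      · have := wBall_mul ih.2 (elem a b g h hb hE)
        rw [mul_assoc, mul_inv_cancel_left] at this
        exact wBall_mono (by omega) this
  have E1 : (f 1)⁻¹ * 1 ∈ wBall T m := by simpa [f1] using wBall_one m
  have path : ∀ u : List ↥S, ∃ w : List ↥T, wordProd T w = f (wordProd S u) ∧
      (run step w 1 1)⁻¹ * wordProd S u ∈ wBall S r := by
    intro u
    induction u using List.reverseRecOn with
    | nil => exact ⟨[], by simp [wordProd_nil', f1], by simpa [run, wordProd_nil'] using wBall_one r⟩
    | append_singleton u s ih =>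
      obtain ⟨w, hw, hr⟩ := ih
      have e : wordProd S (u ++ [s]) = wordProd S u * s := by
        simp [wordProd_append', wordProd_cons', wordProd_nil']
      rw [e]
      set x := wordProd S u with hx
      obtain ⟨v, hv, hv'⟩ := h1 x s s.2
      have hwv : wordProd T (w ++ v) = f (x * s) := by
        rw [wordProd_append', hw, hv']; group
      refine ⟨w ++ v, hwv, ?_⟩
      have Ex : (f x)⁻¹ * f x ∈ wBall T m := by simpa using wBall_one m
      have Ew : (f (run step w 1 1))⁻¹ * f x ∈ wBall T m := by
        have := E_run w 1 1 E1
        rwa [one_mul, hw] at this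
      have Ewv := E_run (w ++ v) 1 1 E1
      rw [one_mul, hwv] at Ewv
      refine close _ _ _ Ewv (by simpa using wBall_one m) ?_
      rw [run_append, one_mul, hw]
      have a1 := run_close v _ _ _ Ew Ex hr
      have a2 := wBall_inv hSsym (run_dist v x _ Ex)
      have a3 := wBall_mul (wBall_mul a1 a2) (wBall_gen s.2)
      have e3 : ∀ p q : G, p⁻¹ * q * (x⁻¹ * q)⁻¹ * (s : G) = p⁻¹ * (x * s) := by
        intro p q; group
      rw [e3] at a3
      refine wBall_mono ?_ a3
      have := Nat.mul_le_mul_left r hv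
      omega
  refine ⟨fun h => ?_, fun x hx => ?_⟩
  · obtain ⟨w, rfl⟩ := exists_word hTsym hTgen h
    have := E_run w 1 1 E1
    rw [one_mul] at this
    exact ⟨_, this⟩
  · obtain ⟨u, rfl⟩ := exists_word hSsym hSgen x
    obtain ⟨w, hw, hr⟩ := path u
    rw [hx] at hw
    have := (rtg [] w 1 1 (hK _ _ (by rw [hw, wordProd_nil'])) E1).2
    have := wBall_mul this hr
    rw [mul_assoc, mul_inv_cancel_left] at this
    have e : (run step [] 1 1)⁻¹ * wordProd S u = 1⁻¹ * wordProd S u := by simp [run]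
    rw [e] at this
    have := close 1 (wordProd S u) 1 E1 (by simpa [hx] using wBall_one m)
      (wBall_mono (by omega) this)
    simpa using this

end core

/-- if `G` is finitely presented with no weakly aperiodic SFT and `H` is a
finitely presented group quasi-isometric to `G`, then some finite-index subgroup of `H` is
isomorphic to the quotient of a finite-index subgroup of `G` by a finite normal subgroup. -/
theorem stmt3 {G H : Type*} [Group G] [Group H] (S : Finset G) (T : Finset H)
    (hSsym : ∀ s ∈ S, s⁻¹ ∈ S) (hSgen : Subgroup.closure (S : Set G) = ⊤)
    (hTsym : ∀ t ∈ T, t⁻¹ ∈ T) (hTgen : Subgroup.closure (T : Set H) = ⊤)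
    (hGfp : ∃ K : ℕ, PresentedBy S K) (hHfp : ∃ K : ℕ, PresentedBy T K)
    (hGnowa : ¬ HasWeaklyAperiodicSFT G)
    (hqi : ∃ f : G → H, IsQI (S : Set G) (T : Set H) f) :
    ∃ (G₀ : Subgroup G) (H₀ : Subgroup H), G₀.FiniteIndex ∧ H₀.FiniteIndex ∧
      -- `H₀` is isomorphic to the quotient of `G₀` by the finite normal subgroup `K`:
      -- there is a surjective homomorphism `G₀ →* H₀` with kernel `K`.
      ∃ K : Subgroup G₀, K.Normal ∧ Finite K ∧
        ∃ φ : G₀ →* H₀, Function.Surjective φ ∧ φ.ker = K := by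
  classical
  obtain ⟨K₁, hK₁⟩ := hGfp
  obtain ⟨K₂, hK₂⟩ := hHfp
  obtain ⟨f₀, hf₀⟩ := hqi
  obtain ⟨m, r, hgood⟩ := hf₀.good hSsym hSgen hTsym hTgen
  obtain ⟨R, hR⟩ : ∃ R, R = K₁ + 3 * r + 2 * (r * K₂) + (r + r * m + 1) := ⟨_, rfl⟩
  have : Finite ↥(wBall T m) := (wBall_finite m).to_subtype
  obtain ⟨k, ⟨e⟩⟩ := Finite.exists_equiv_fin (↥S → ↥(wBall T m))
  let Q : (↥(wBall_finite (S := S) R).toFinset → Fin k) → Prop := fun p =>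
    ∃ f' : G → H, Good S T m r f' ∧ ∀ x, ∀ s : ↥S,
      ((e.symm (p x) s : ↥(wBall T m)) : H) = (f' x)⁻¹ * f' (x * s)
  let X : Set (G → Fin k) := {σ | ∀ g, Q (fun x => σ (g * x))}
  have hX : IsSFT X := isSFT_of_window _ Q
  have hne : X.Nonempty := by
    refine ⟨fun g => e (fun s => ⟨(f₀ g)⁻¹ * f₀ (g * s), hgood.1 g s s.2⟩), fun g => ?_⟩
    refine ⟨fun x => f₀ (g * x), hgood.shift g, fun x s => ?_⟩
    simp [mul_assoc]
  obtain ⟨σ, hσ, hidx⟩ : ∃ σ ∈ X, (shiftStab σ).index ≠ 0 := by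
    by_contra! hc
    exact hGnowa ⟨Fin k, inferInstance, X, hX, hne, hc⟩
  let l : G → ↥S → H := fun g s => ((e.symm (σ g) s : ↥(wBall T m)) : H)
  have hloc : ∀ g, ∃ f' : G → H, Good S T m r f' ∧ ∀ x ∈ wBall S R, ∀ s : ↥S,
      l (g * x) s = (f' x)⁻¹ * f' (x * s) := by
    intro g
    obtain ⟨f', hf', h⟩ := hσ g
    exact ⟨f', hf', fun x hx s => h ⟨x, by simpa using hx⟩ s⟩
  choose F hFgood hF using hloc
  have hholF : ∀ g w, w.length ≤ R → hol l g w = (F g 1)⁻¹ * F g (wordProd S w) := by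
    intro g w hw
    have := hol_local (hF g) [] w (by simpa using hw)
    simpa [wordProd_nil'] using this
  have hl : ∀ g v v', v.length ≤ K₁ → v'.length ≤ K₁ → wordProd S v = wordProd S v' →
      hol l g v = hol l g v' := by
    intro g v v' h h' hp
    rw [hholF g v (by omega), hholF g v' (by omega), hp]
  choose wd hwd using exists_word hSsym hSgen
  obtain ⟨f, hfdef⟩ : ∃ f : G → H, f = fun x => hol l 1 (wd x) := ⟨_, rfl⟩
  have hfmul : ∀ x w, f (x * wordProd S w) = f x * hol l x w := by
    intro x w
    have h1 : hol l 1 (wd (x * wordProd S w)) = hol l 1 (wd x ++ w) :=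
      hol_eq hK₁ hl (by rw [hwd, wordProd_append', hwd])
    rw [hfdef]
    simp only
    rw [h1, hol_append, hwd, one_mul]
  have hf1 : f 1 = 1 := by
    have h1 : hol l 1 (wd 1) = hol l 1 [] := hol_eq hK₁ hl (by rw [hwd, wordProd_nil'])
    rw [hfdef]
    simpa [hol] using h1
  have hfF : ∀ g, ∀ u ∈ wBall S R, f (g * u) = f g * (F g 1)⁻¹ * F g u := by
    rintro g _ ⟨w, hw, rfl⟩
    rw [hfmul, hholF g w hw, mul_assoc]
  obtain ⟨hsurj, hfib⟩ := core_lemma (f := f) hSsym hSgen hTsym hTgen (m := m) (r := r) (R := R)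
    hK₂ (by omega) (by omega) (by omega) hf1
    (by
      intro g s hs
      rw [hfF g s (wBall_mono (by omega) (wBall_gen hs))]
      have := (hFgood g).1 1 s hs
      simpa [mul_assoc] using this)
    (by
      intro g b hb t ht
      obtain ⟨c, hc, b', hb', h⟩ := (hFgood g).2.1 1 b hb t ht
      refine ⟨c, hc, b', hb', ?_⟩
      rw [hfF g c (wBall_mono (by omega) hc)]
      rw [one_mul] at h
      rw [mul_assoc _ (F g c), ← h]; group)
    (by
      intro g u hu b hb b' hb' h
      refine (hFgood g).2.2 1 u b hb b' hb' ?_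
      rw [hfF g u hu, mul_assoc, mul_assoc, mul_left_cancel_iff, eq_inv_mul_iff_mul_eq] at h
      rwa [one_mul])
  have hholstab : ∀ g ∈ shiftStab σ, ∀ w x, hol l (g * x) w = hol l x w := by
    intro g hg w
    induction w with
    | nil => intro x; rfl
    | cons s w ih =>
      intro x
      have h1 : l (g * x) s = l x s := by
        have : σ (g * x) = σ x := hg x
        simp only [l, this]
      rw [hol, hol, h1, mul_assoc, ih]
  have hmul : ∀ g ∈ shiftStab σ, ∀ x, f (g * x) = f g * f x := by
    intro g hg x
    have h1 := hfmul g (wd x)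
    have h2 := hfmul 1 (wd x)
    have h3 := hholstab g hg (wd x) 1
    rw [mul_one] at h3
    rw [hwd] at h1 h2
    rw [one_mul, hf1, one_mul] at h2
    rw [h1, h3, ← h2]
  let ψ : ↥(shiftStab σ) →* H :=
    { toFun := fun g => f g
      map_one' := hf1
      map_mul' := fun a b => hmul a a.2 b }
  have hfi : (shiftStab σ).FiniteIndex := ⟨hidx⟩
  refine ⟨shiftStab σ, ψ.range, hfi, ?_, ψ.rangeRestrict.ker, inferInstance, ?_,
    ψ.rangeRestrict, ψ.rangeRestrict_surjective, rfl⟩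
  · have : Finite (H ⧸ ψ.range) := by
      let q : (G ⧸ shiftStab σ) × ↥(wBall T m) → H ⧸ ψ.range :=
        fun p => QuotientGroup.mk ((f (p.1.out)⁻¹ * p.2)⁻¹)
      refine Finite.of_surjective q ?_
      intro y
      obtain ⟨h, rfl⟩ := QuotientGroup.mk_surjective y
      obtain ⟨x, hx⟩ := hsurj h⁻¹
      refine ⟨(QuotientGroup.mk x⁻¹, ⟨_, hx⟩), ?_⟩
      obtain ⟨g, hg⟩ := QuotientGroup.mk_out_eq_mul (shiftStab σ) x⁻¹
      simp only [q]
      rw [hg, eq_comm, QuotientGroup.eq]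
      have e1 : (x⁻¹ * (g : G))⁻¹ = (g⁻¹ : ↥(shiftStab σ)) * x := by simp
      rw [e1, hmul _ (g⁻¹).2]
      refine ⟨g, ?_⟩
      have e2 : ψ g = (ψ g⁻¹)⁻¹ := by simp
      rw [e2]
      change (f _)⁻¹ = _
      group
    exact Subgroup.finiteIndex_of_finite_quotient
  · have hfin : Finite ↥(wBall S r) := (wBall_finite r).to_subtype
    refine Finite.of_injective
      (fun x : ↥(ψ.rangeRestrict.ker) => (⟨((x : ↥(shiftStab σ)) : G), ?_⟩ : ↥(wBall S r))) ?_
    · apply hfib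
      exact congrArg Subtype.val (MonoidHom.mem_ker.mp x.2)
    · intro a b hab
      simp only [Subtype.mk.injEq] at hab
      exact Subtype.ext (Subtype.ext hab)
end
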